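/- arXiv:0907.4294 — 5 statements merged into one kernel-verified Lean document; each statement's English description precedes it below -/
import Mathlib

section
/- Let ξ₀ be the unique positive zero of t ↦ 1 − t·tanh(t). (i) For every smooth function f : ℝ × ℝ → ℝ which is 2π-periodic in its second variable θ and whose support is contained in K × ℝ for some compact set K ⊂ (−ξ₀, ξ₀), one has ∫₀^{2π} ∫_{−ξ₀}^{ξ₀} ( (∂_t f)² + (∂_θ f)² − 2·cosh(t)^{−2}·f² ) dt dθ ≥ 0. (ii) For every ε > 0 there exists a smooth compactly supported function g : ℝ → ℝ with support contained in (−ξ₀ − ε, ξ₀ + ε) such that ∫_ℝ ( g'(t)² − 2·cosh(t)^{−2}·g(t)² ) dt < 0. -/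
open Real MeasureTheory Set Filter Topology

/-- The radial Jacobi function. -/
noncomputable def catU (t : ℝ) : ℝ := 1 - t * Real.tanh t

/-- Its derivative. -/
noncomputable def catV (t : ℝ) : ℝ := -(Real.tanh t + t * (Real.cosh t ^ 2)⁻¹)

lemma hasDerivAt_tanh' (t : ℝ) : HasDerivAt Real.tanh ((Real.cosh t ^ 2)⁻¹) t := by
  have hc : Real.cosh t ≠ 0 := (Real.cosh_pos t).ne'
  have h := (Real.hasDerivAt_sinh t).div (Real.hasDerivAt_cosh t) hc
  have e : Real.tanh = Real.sinh / Real.cosh := by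
    funext x; simp [Real.tanh_eq_sinh_div_cosh]
  rw [e]
  refine HasDerivAt.congr_deriv h ?_
  have := Real.cosh_sq t
  field_simp
  linarith

lemma contDiff_tanh' : ContDiff ℝ (⊤ : ℕ∞) Real.tanh := by
  have e : Real.tanh = fun x => Real.sinh x / Real.cosh x := by
    funext x; simp [Real.tanh_eq_sinh_div_cosh]
  rw [e]
  exact Real.contDiff_sinh.div Real.contDiff_cosh (fun x => (Real.cosh_pos x).ne')

lemma catU_contDiff : ContDiff ℝ (⊤ : ℕ∞) catU :=
  contDiff_const.sub (contDiff_id.mul contDiff_tanh')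

lemma catU_hasDerivAt (t : ℝ) : HasDerivAt catU (catV t) t := by
  have h := ((hasDerivAt_id t).mul (hasDerivAt_tanh' t)).const_sub 1
  refine HasDerivAt.congr_deriv h ?_
  simp [catV]

lemma sech_hasDerivAt (t : ℝ) :
    HasDerivAt (fun t => (Real.cosh t ^ 2)⁻¹) (-2 * Real.tanh t * (Real.cosh t ^ 2)⁻¹) t := by
  have hc : Real.cosh t ≠ 0 := (Real.cosh_pos t).ne'
  have h := ((Real.hasDerivAt_cosh t).pow 2).inv (pow_ne_zero 2 hc)
  refine HasDerivAt.congr_deriv h ?_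
  rw [Real.tanh_eq_sinh_div_cosh]
  simp
  field_simp

lemma catV_hasDerivAt (t : ℝ) :
    HasDerivAt catV (-2 * (Real.cosh t ^ 2)⁻¹ * catU t) t := by
  have h := ((hasDerivAt_tanh' t).add ((hasDerivAt_id t).mul (sech_hasDerivAt t))).neg
  refine HasDerivAt.congr_deriv h ?_
  simp [catU]
  ring

lemma catV_continuous : Continuous catV :=
  continuous_iff_continuousAt.2 fun t => (catV_hasDerivAt t).continuousAt

lemma sech_continuous : Continuous (fun t : ℝ => (Real.cosh t ^ 2)⁻¹) :=
  continuous_iff_continuousAt.2 fun t => (sech_hasDerivAt t).continuousAt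

lemma sech_pos (t : ℝ) : 0 < (Real.cosh t ^ 2)⁻¹ := by
  have := Real.cosh_pos t
  positivity

lemma tanh_strictMono' : StrictMono Real.tanh :=
  strictMono_of_deriv_pos fun t => by
    rw [(hasDerivAt_tanh' t).deriv]; exact sech_pos t

lemma catU_abs (t : ℝ) : catU |t| = catU t := by
  rcases abs_choice t with h | h <;> simp [h, catU, Real.tanh_neg]

lemma catU_lt {s t : ℝ} (h : |s| < |t|) : catU t < catU s := by
  rw [← catU_abs t, ← catU_abs s]
  unfold catU
  have h1 := tanh_strictMono' h
  have h0 : 0 ≤ Real.tanh |s| := by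
    have := tanh_strictMono'.monotone (abs_nonneg s)
    simpa using this
  have := abs_nonneg s
  nlinarith

lemma exists_profile (δ : ℝ) (hδ : 0 < δ) : ∃ S P ρ : ℝ → ℝ,
    ContDiff ℝ (⊤ : ℕ∞) S ∧ (∀ x, HasDerivAt S (P x) x) ∧ (∀ x, HasDerivAt P (ρ x) x) ∧
    Continuous ρ ∧ (∀ x, 0 ≤ ρ x) ∧ (∀ x ≤ -δ, S x = 0) ∧ (∀ x, 0 ≤ S x) ∧
    (∀ x, 0 ≤ S x - x * P x) ∧ 0 < S 1 ∧ 0 < S 1 - 1 * P 1 := by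
  let ρ : ℝ → ℝ := fun x => expNegInvGlue (x + δ) * expNegInvGlue (-x)
  have hρs : ContDiff ℝ (⊤ : ℕ∞) ρ :=
    (expNegInvGlue.contDiff.comp (contDiff_id.add contDiff_const)).mul
      (expNegInvGlue.contDiff.comp contDiff_neg)
  have hρc : Continuous ρ := hρs.continuous
  have hρ0 : ∀ x, 0 ≤ ρ x := fun x => mul_nonneg (expNegInvGlue.nonneg _) (expNegInvGlue.nonneg _)
  have hρz : ∀ x ≤ -δ, ρ x = 0 := fun x hx => by
    have : expNegInvGlue (x + δ) = 0 := expNegInvGlue.zero_of_nonpos (by linarith)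
    simp [ρ, this]
  have hρz' : ∀ x, 0 ≤ x → ρ x = 0 := fun x hx => by
    have : expNegInvGlue (-x) = 0 := expNegInvGlue.zero_of_nonpos (by linarith)
    simp [ρ, this]
  have hρp : ∀ x, -δ < x → x < 0 → 0 < ρ x := fun x h1 h2 =>
    mul_pos (expNegInvGlue.pos_of_pos (by linarith)) (expNegInvGlue.pos_of_pos (by linarith))
  let P : ℝ → ℝ := fun x => ∫ s in (-δ)..x, ρ s
  have hP : ∀ x, HasDerivAt P (ρ x) x := fun x => hρc.integral_hasStrictDerivAt _ x |>.hasDerivAt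
  have hPc : Continuous P := continuous_iff_continuousAt.2 fun t => (hP t).continuousAt
  let S : ℝ → ℝ := fun x => ∫ s in (-δ)..x, P s
  have hS : ∀ x, HasDerivAt S (P x) x := fun x => hPc.integral_hasStrictDerivAt _ x |>.hasDerivAt
  have zl : ∀ φ : ℝ → ℝ, (∀ x ≤ -δ, φ x = 0) → ∀ x ≤ -δ, ∫ s in (-δ)..x, φ s = 0 := by
    intro φ hφ x hx
    have : ∫ s in (-δ)..x, φ s = ∫ s in (-δ)..x, (0:ℝ) := by
      apply intervalIntegral.integral_congr
      intro s hs
      rw [uIcc_of_ge hx] at hs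
      exact hφ s hs.2
    simp [this]
  have hPz : ∀ x ≤ -δ, P x = 0 := zl ρ hρz
  have hSz : ∀ x ≤ -δ, S x = 0 := zl P hPz
  have nn : ∀ φ : ℝ → ℝ, Monotone φ → (∀ x ≤ -δ, φ x = 0) → ∀ x, 0 ≤ φ x := by
    intro φ hm hz x
    rcases le_total x (-δ) with h | h
    · exact (hz x h).ge
    · rw [← hz (-δ) le_rfl]; exact hm h
  have hP0 : ∀ x, 0 ≤ P x := nn P (monotone_of_deriv_nonneg (fun x => (hP x).differentiableAt)
    fun x => by rw [(hP x).deriv]; exact hρ0 x) hPz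
  have hS0 : ∀ x, 0 ≤ S x := nn S (monotone_of_deriv_nonneg (fun x => (hS x).differentiableAt)
    fun x => by rw [(hS x).deriv]; exact hP0 x) hSz
  let T : ℝ → ℝ := fun x => S x - x * P x
  have hT : ∀ x, HasDerivAt T (-x * ρ x) x := fun x => by
    have h := (hS x).sub ((hasDerivAt_id x).mul (hP x))
    refine HasDerivAt.congr_deriv h ?_
    simp
  have hTm : Monotone T := monotone_of_deriv_nonneg (fun x => (hT x).differentiableAt)
    fun x => by
      rw [(hT x).deriv]
      rcases le_total 0 x with h | h
      · simp [hρz' x h]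
      · exact mul_nonneg (by linarith) (hρ0 x)
  have hTz : ∀ x ≤ -δ, T x = 0 := fun x hx => by simp [T, hSz x hx, hPz x hx]
  have hT0 : ∀ x, 0 ≤ T x := nn T hTm hTz
  have hTs : StrictMonoOn T (Icc (-δ) 0) := by
    apply strictMonoOn_of_deriv_pos (convex_Icc _ _)
    · exact fun x _ => (hT x).continuousAt.continuousWithinAt
    · intro x hx
      rw [interior_Icc] at hx
      rw [(hT x).deriv]
      exact mul_pos (by linarith [hx.2]) (hρp x hx.1 hx.2)
  have hT1 : 0 < T 1 := by
    have h1 : T (-δ) < T 0 := hTs ⟨le_rfl, by linarith⟩ ⟨by linarith, le_rfl⟩ (by linarith)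
    have h2 : T 0 ≤ T 1 := hTm zero_le_one
    have h3 := hTz (-δ) le_rfl
    linarith
  have hPs : ContDiff ℝ (⊤ : ℕ∞) P := by
    rw [contDiff_infty_iff_deriv]
    refine ⟨fun x => (hP x).differentiableAt, ?_⟩
    rw [show deriv P = ρ from funext fun x => (hP x).deriv]; exact hρs
  have hSs : ContDiff ℝ (⊤ : ℕ∞) S := by
    rw [contDiff_infty_iff_deriv]
    refine ⟨fun x => (hS x).differentiableAt, ?_⟩
    rw [show deriv S = P from funext fun x => (hS x).deriv]; exact hPs
  refine ⟨S, P, ρ, hSs, hS, hP, hρc, hρ0, hSz, hS0, hT0, ?_, hT1⟩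
  have : T 1 = S 1 - 1 * P 1 := rfl
  linarith [hP0 1]

lemma part_two (ξ₀ : ℝ) (hξpos : 0 < ξ₀) (hξzero : catU ξ₀ = 0) (ε : ℝ) (hε : 0 < ε) :
    ∃ g : ℝ → ℝ, ContDiff ℝ (⊤ : ℕ∞) g ∧ HasCompactSupport g ∧
      tsupport g ⊆ Set.Ioo (-ξ₀ - ε) (ξ₀ + ε) ∧
      (∫ t : ℝ, ((deriv g t) ^ 2 - 2 * (Real.cosh t ^ 2)⁻¹ * (g t) ^ 2)) < 0 := by
  set R := ξ₀ + ε / 2 with hR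
  have hRpos : 0 < R := by positivity
  have hδ : 0 < - catU R := by
    have := @catU_lt ξ₀ R (by rw [abs_of_pos hξpos, abs_of_pos hRpos]; linarith)
    linarith
  obtain ⟨S, P, ρ, hSs, hS, hP, hρc, hρ0, hSz, hS0, hT0, hS1, hT1⟩ := exists_profile _ hδ
  have hPc : Continuous P := continuous_iff_continuousAt.2 fun t => (hP t).continuousAt
  have hUc : Continuous catU := catU_contDiff.continuous
  have hVc := catV_continuous
  have hSc : Continuous S := hSs.continuous
  have hsc := sech_continuous
  let g : ℝ → ℝ := fun t => S (catU t)
  have hgz : ∀ t, R < |t| → g t = 0 := fun t ht => by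
    apply hSz
    have := @catU_lt R t (by rwa [abs_of_pos hRpos])
    linarith
  have hgK : ∀ t, t ∉ Icc (-R) R → g t = 0 := fun t ht => hgz t (by
    rw [mem_Icc, ← abs_le] at ht; exact not_le.1 ht)
  have hgc : HasCompactSupport g := HasCompactSupport.intro isCompact_Icc hgK
  have hg : ∀ t, HasDerivAt g (P (catU t) * catV t) t := fun t =>
    (hS (catU t)).comp t (catU_hasDerivAt t)
  have hg' : deriv g = fun t => P (catU t) * catV t := funext fun t => (hg t).deriv
  have hgs : ContDiff ℝ (⊤ : ℕ∞) g := hSs.comp catU_contDiff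
  refine ⟨g, hgs, hgc, ?_, ?_⟩
  · have : tsupport g ⊆ Icc (-R) R := closure_minimal (fun t ht => by
      by_contra h; exact ht (hgK t h)) isClosed_Icc
    intro t ht
    have := this ht
    constructor <;> linarith [this.1, this.2]
  · let N : ℝ → ℝ := fun t => g t * (ρ (catU t) * catV t ^ 2 +
      2 * (Real.cosh t ^ 2)⁻¹ * (S (catU t) - catU t * P (catU t)))
    have hNc : Continuous N := by
      simp only [N, g]
      fun_prop
    have hNcs : HasCompactSupport N := hgc.mul_right
    have hN0 : 0 ≤ N := fun t => by
      have h1 := hS0 (catU t)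
      have h2 := hρ0 (catU t)
      have h3 := hT0 (catU t)
      have h4 := sech_pos t
      show 0 ≤ S (catU t) * _
      positivity
    have hNpos : N 0 ≠ 0 := by
      have : catU 0 = 1 := by simp [catU]
      have hv : catV 0 = 0 := by simp [catV]
      simp only [N, g, this, hv]
      have : 0 < S 1 * (2 * (S 1 - 1 * P 1)) := by positivity
      simpa using this.ne'
    have hNint : 0 < ∫ t, N t := hNc.integral_pos_of_hasCompactSupport_nonneg_nonzero hNcs hN0 hNpos
    have hNi : Integrable N := hNc.integrable_of_hasCompactSupport hNcs
    let q : ℝ → ℝ := fun t => (deriv g t) ^ 2 - 2 * (Real.cosh t ^ 2)⁻¹ * (g t) ^ 2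
    have hqc : Continuous q := by
      simp only [q, hg', g]
      fun_prop
    have hqcs : HasCompactSupport q := by
      refine HasCompactSupport.intro (K := tsupport g) hgc fun t ht => ?_
      have h1 : g t = 0 := image_eq_zero_of_notMem_tsupport ht
      have h2 : deriv g t = 0 := by
        by_contra h; exact ht (support_deriv_subset h)
      simp [q, h1, h2]
    have hqi : Integrable q := hqc.integrable_of_hasCompactSupport hqcs
    let F : ℝ → ℝ := fun t => g t * (P (catU t) * catV t)
    have hF : ∀ t, HasDerivAt F (q t + N t) t := fun t => by
      have h := (hg t).mul (((hP (catU t)).comp t (catU_hasDerivAt t)).mul (catV_hasDerivAt t))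
      refine HasDerivAt.congr_deriv h ?_
      simp only [q, N, hg', g, Pi.mul_apply, Function.comp]
      ring
    have hFc : Continuous F := continuous_iff_continuousAt.2 fun t => (hF t).continuousAt
    have hFi : Integrable F := hFc.integrable_of_hasCompactSupport hgc.mul_right
    have h0 := integral_eq_zero_of_hasDerivAt_of_integrable hF (hqi.add hNi) hFi
    rw [integral_add hqi hNi] at h0
    show ∫ t, q t < 0
    linarith

lemma part_one_inner (ξ₀ : ℝ) (hξpos : 0 < ξ₀) (hξzero : catU ξ₀ = 0)
    (h h' r : ℝ → ℝ) (hd : ∀ t, HasDerivAt h (h' t) t) (hc' : Continuous h') (hr : Continuous r)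
    (K : Set ℝ) (hK : IsCompact K) (hKs : K ⊆ Ioo (-ξ₀) ξ₀) (hs : ∀ t ∉ K, h t = 0) :
    0 ≤ ∫ t in (-ξ₀)..ξ₀, (h' t ^ 2 + r t ^ 2 - 2 * (Real.cosh t ^ 2)⁻¹ * h t ^ 2) := by
  have hc : Continuous h := continuous_iff_continuousAt.2 fun t => (hd t).continuousAt
  have hsc := sech_continuous
  let F : ℝ → ℝ := fun t => catV t / catU t * h t ^ 2
  have hUpos : ∀ t ∈ Ioo (-ξ₀) ξ₀, 0 < catU t := fun t ht => by
    rw [← hξzero]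
    exact catU_lt (by rw [abs_of_pos hξpos]; exact abs_lt.2 ht)
  have hFd : ∀ t ∈ Ioo (-ξ₀) ξ₀, HasDerivAt F
      (h' t ^ 2 - 2 * (Real.cosh t ^ 2)⁻¹ * h t ^ 2 - (h' t - catV t / catU t * h t) ^ 2) t := by
    intro t ht
    have hu := (hUpos t ht).ne'
    have := ((catV_hasDerivAt t).div (catU_hasDerivAt t) hu).mul ((hd t).pow 2)
    refine HasDerivAt.congr_deriv this ?_
    simp
    field_simp
    ring
  have hFz : ∀ t ∉ K, F t = 0 := fun t ht => by simp [F, hs t ht]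
  have hFc : Continuous F := continuous_iff_continuousAt.2 fun t => by
    by_cases ht : t ∈ K
    · exact (hFd t (hKs ht)).continuousAt
    · have : F =ᶠ[𝓝 t] fun _ => 0 := by
        filter_upwards [hK.isClosed.isOpen_compl.mem_nhds ht] with s hs
        exact hFz s hs
      exact continuousAt_const.congr this.symm
  have key := intervalIntegral.sub_le_integral_of_hasDeriv_right_of_le
    (φ := fun t => h' t ^ 2 + r t ^ 2 - 2 * (Real.cosh t ^ 2)⁻¹ * h t ^ 2)
    (by linarith : -ξ₀ ≤ ξ₀) hFc.continuousOn
    (fun t ht => (hFd t ht).hasDerivWithinAt)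
    (Continuous.integrableOn_Icc (by fun_prop))
    (fun t _ => by nlinarith [sq_nonneg (r t), sq_nonneg (h' t - catV t / catU t * h t)])
  rw [hFz ξ₀ (fun h => lt_irrefl _ (hKs h).2), hFz (-ξ₀) (fun h => lt_irrefl _ (hKs h).1)] at key
  simpa using key

/-- Lindelöf's theorem for the Euclidean catenoid: the band `|t| < ξ₀` is weakly stable,
and any strictly larger rotation-invariant band is unstable. -/
theorem stmt1 (ξ₀ : ℝ) (hξpos : 0 < ξ₀) (hξzero : 1 - ξ₀ * Real.tanh ξ₀ = 0)
    (hξuniq : ∀ t : ℝ, 0 < t → 1 - t * Real.tanh t = 0 → t = ξ₀) :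
    (∀ f : ℝ × ℝ → ℝ, ContDiff ℝ (⊤ : ℕ∞) f →
      (∀ t θ : ℝ, f (t, θ + 2 * π) = f (t, θ)) →
      (∃ K : Set ℝ, IsCompact K ∧ K ⊆ Set.Ioo (-ξ₀) ξ₀ ∧
        Function.support f ⊆ K ×ˢ (Set.univ : Set ℝ)) →
      0 ≤ ∫ θ in (0:ℝ)..(2 * π), ∫ t in (-ξ₀)..ξ₀,
        ((deriv (fun t' => f (t', θ)) t) ^ 2 + (deriv (fun θ' => f (t, θ')) θ) ^ 2
          - 2 * (Real.cosh t ^ 2)⁻¹ * (f (t, θ)) ^ 2)) ∧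
    (∀ ε : ℝ, 0 < ε → ∃ g : ℝ → ℝ, ContDiff ℝ (⊤ : ℕ∞) g ∧ HasCompactSupport g ∧
      tsupport g ⊆ Set.Ioo (-ξ₀ - ε) (ξ₀ + ε) ∧
      (∫ t : ℝ, ((deriv g t) ^ 2 - 2 * (Real.cosh t ^ 2)⁻¹ * (g t) ^ 2)) < 0) := by
  have hz : catU ξ₀ = 0 := hξzero
  refine ⟨?_, fun ε hε => part_two ξ₀ hξpos hz ε hε⟩
  rintro f hf - ⟨K, hK, hKs, hsupp⟩
  apply intervalIntegral.integral_nonneg (by positivity)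
  intro θ _
  have hfd : Differentiable ℝ f := hf.differentiable (by simp)
  have hfc : Continuous (fderiv ℝ f) := hf.continuous_fderiv (by simp)
  have h1 : ∀ t, HasDerivAt (fun t' => f (t', θ)) (fderiv ℝ f (t, θ) (1, 0)) t := fun t =>
    (hfd (t, θ)).hasFDerivAt.comp_hasDerivAt t ((hasDerivAt_id t).prodMk (hasDerivAt_const t θ))
  have h2 : ∀ t, HasDerivAt (fun θ' => f (t, θ')) (fderiv ℝ f (t, θ) (0, 1)) θ := fun t =>
    (hfd (t, θ)).hasFDerivAt.comp_hasDerivAt θ ((hasDerivAt_const θ t).prodMk (hasDerivAt_id θ))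
  simp only [fun t => (h1 t).deriv, fun t => (h2 t).deriv]
  refine part_one_inner ξ₀ hξpos hz (fun t => f (t, θ)) _ _ h1 ?_ ?_ K hK hKs ?_
  · fun_prop
  · fun_prop
  · intro t ht
    by_contra h
    exact ht (hsupp (show (t, θ) ∈ Function.support f from h)).1
end

section
/- (i) For every smooth compactly supported function f : ℝ → ℝ with support contained in (0, ∞), one has ∫₀^∞ ( f'(t)² − 2·cosh(t)^{−2}·f(t)² ) dt ≥ 0. (ii) For every δ > 0 there exists a smooth compactly supported function g : ℝ → ℝ with support contained in (−δ, ∞) such that ∫_ℝ ( g'(t)² − 2·cosh(t)^{−2}·g(t)² ) dt < 0. -/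
open Real MeasureTheory Set Filter Topology

lemma aux_tanh_deriv (t : ℝ) :
    HasDerivAt (fun t => Real.sinh t / Real.cosh t) ((Real.cosh t ^ 2)⁻¹) t := by
  have hc := (Real.cosh_pos t).ne'
  have h := (Real.hasDerivAt_sinh t).div (Real.hasDerivAt_cosh t) hc
  refine h.congr_deriv ?_
  have := Real.cosh_sq t
  field_simp
  linarith

lemma aux_part1 (f : ℝ → ℝ) (hf : ContDiff ℝ (⊤ : ℕ∞) f) (hc : HasCompactSupport f)
    (hs : tsupport f ⊆ Set.Ioi (0:ℝ)) :
    0 ≤ ∫ t in Set.Ioi (0:ℝ), ((deriv f t) ^ 2 - 2 * (Real.cosh t ^ 2)⁻¹ * (f t) ^ 2) := by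
  have hf1 : ContDiff ℝ 1 f := hf.of_le (by exact_mod_cast le_top)
  set h : ℝ → ℝ := fun t => (Real.sinh t * Real.cosh t)⁻¹ * (f t) ^ 2 with hh
  have hC : ContDiff ℝ 1 h := by
    rw [contDiff_iff_contDiffAt]
    intro x
    by_cases hx : x ∈ tsupport f
    · have hx0 : 0 < x := hs hx
      have hne : Real.sinh x * Real.cosh x ≠ 0 :=
        (mul_pos (Real.sinh_pos_iff.2 hx0) (Real.cosh_pos x)).ne'
      exact ((Real.contDiff_sinh.contDiffAt.mul Real.contDiff_cosh.contDiffAt).inv hne).mul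
        (hf1.contDiffAt.pow 2)
    · have h0 : f =ᶠ[𝓝 x] 0 := notMem_tsupport_iff_eventuallyEq.1 hx
      have : h =ᶠ[𝓝 x] fun _ => 0 := by
        filter_upwards [h0] with y hy
        simp [hh, hy]
      exact contDiffAt_const.congr_of_eventuallyEq this
  have hcs : HasCompactSupport h := by
    refine hc.mono ?_
    intro x hx hx'
    apply hx
    simp [hh, hx']
  have hI := HasCompactSupport.integral_Ioi_deriv_eq hC hcs 0
  have h00 : h 0 = 0 := by simp [hh]
  rw [h00, neg_zero] at hI
  refine hI.symm.le.trans ?_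
  have hi1 : Integrable (deriv h) :=
    (hC.continuous_deriv le_rfl).integrable_of_hasCompactSupport hcs.deriv
  have hcosh : ∀ t : ℝ, Real.cosh t ^ 2 ≠ 0 := fun t => (pow_pos (Real.cosh_pos t) 2).ne'
  have hi2 : Integrable (fun t => (deriv f t) ^ 2 - 2 * (Real.cosh t ^ 2)⁻¹ * (f t) ^ 2) := by
    refine Continuous.integrable_of_hasCompactSupport ?_ ?_
    · have h1 := hf1.continuous_deriv le_rfl
      have h2 := hf1.continuous
      have h3 : Continuous fun t => (Real.cosh t ^ 2)⁻¹ :=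
        (Real.continuous_cosh.pow 2).inv₀ hcosh
      fun_prop
    · refine hc.mono' ?_
      intro x hx
      by_contra hx'
      apply hx
      have h1 : f x = 0 := image_eq_zero_of_notMem_tsupport hx'
      have h2 : deriv f x = 0 := by
        by_contra hne
        exact hx' (support_deriv_subset hne)
      simp [h1, h2]
  refine setIntegral_mono_on hi1.integrableOn hi2.integrableOn measurableSet_Ioi ?_
  intro t ht
  have hs0 := Real.sinh_pos_iff.2 (show (0:ℝ) < t from ht)
  have hc0 := Real.cosh_pos t
  have hd : HasDerivAt f (deriv f t) t := (hf1.differentiable one_ne_zero t).hasDerivAt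
  have hD := (((Real.hasDerivAt_sinh t).mul (Real.hasDerivAt_cosh t)).inv
    (mul_pos hs0 hc0).ne').mul (hd.pow 2)
  have hD' : deriv h t = _ := hD.deriv
  rw [hD']
  have key : 0 ≤ (deriv f t - f t / (Real.sinh t * Real.cosh t)) ^ 2 := sq_nonneg _
  refine le_of_sub_nonneg (key.trans_eq ?_)
  have hq := Real.cosh_sq t
  simp only [Pi.mul_apply, Pi.inv_apply, Pi.pow_apply]
  field_simp
  push_cast
  ring_nf
  generalize Real.sinh t = s at *
  generalize Real.cosh t = c at *
  have : c ^ 2 = s ^ 2 + 1 := hq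
  linear_combination (f t ^ 2) * (-1) * this

lemma aux_S : ∃ C : ℝ, 0 ≤ C ∧ (∀ x, |deriv Real.smoothTransition x| ≤ C) ∧
    (∀ x, x < 0 → deriv Real.smoothTransition x = 0) ∧
    (∀ x, 1 < x → deriv Real.smoothTransition x = 0) := by
  have hS : ContDiff ℝ 1 Real.smoothTransition := Real.smoothTransition.contDiff (n := 1)
  have hl : ∀ x, x < 0 → deriv Real.smoothTransition x = 0 := by
    intro x hx
    have : Real.smoothTransition =ᶠ[𝓝 x] fun _ => 0 := by
      filter_upwards [Iio_mem_nhds hx] with y hy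
      exact Real.smoothTransition.zero_of_nonpos (le_of_lt hy)
    rw [this.deriv_eq]; simp
  have hr : ∀ x, 1 < x → deriv Real.smoothTransition x = 0 := by
    intro x hx
    have : Real.smoothTransition =ᶠ[𝓝 x] fun _ => 1 := by
      filter_upwards [Ioi_mem_nhds hx] with y hy
      exact Real.smoothTransition.one_of_one_le (le_of_lt hy)
    rw [this.deriv_eq]; simp
  obtain ⟨C, hC⟩ := (isCompact_Icc (a := (0:ℝ)) (b := 1)).exists_bound_of_continuousOn
    (hS.continuous_deriv le_rfl).continuousOn
  have hC0 : 0 ≤ C := (norm_nonneg _).trans (hC 0 (by simp))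
  refine ⟨C, hC0, ?_, hl, hr⟩
  intro x
  by_cases h0 : x < 0
  · rw [hl x h0]; simpa
  by_cases h1 : 1 < x
  · rw [hr x h1]; simpa
  · exact hC x ⟨not_lt.1 h0, not_lt.1 h1⟩

lemma aux_part2 (δ : ℝ) (hδ : 0 < δ) : ∃ g : ℝ → ℝ, ContDiff ℝ (⊤ : ℕ∞) g ∧ HasCompactSupport g ∧
      tsupport g ⊆ Set.Ioi (-δ) ∧
      (∫ t : ℝ, ((deriv g t) ^ 2 - 2 * (Real.cosh t ^ 2)⁻¹ * (g t) ^ 2)) < 0 := by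
  obtain ⟨C, hC0, hC, hSl, hSr⟩ := aux_S
  set S := Real.smoothTransition with hSdef
  have hSC : ContDiff ℝ (⊤ : ℕ∞) S := Real.smoothTransition.contDiff
  set T : ℝ → ℝ := fun t => Real.sinh t / Real.cosh t with hT
  have hTd : ∀ t, HasDerivAt T ((Real.cosh t ^ 2)⁻¹) t := aux_tanh_deriv
  have hcosh : ∀ t : ℝ, Real.cosh t ^ 2 ≠ 0 := fun t => (pow_pos (Real.cosh_pos t) 2).ne'
  have hTC : ContDiff ℝ (⊤ : ℕ∞) T :=
    Real.contDiff_sinh.div Real.contDiff_cosh (fun t => (Real.cosh_pos t).ne')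
  have hTmono : Monotone T := by
    refine monotone_of_deriv_nonneg (fun t => (hTd t).differentiableAt) ?_
    intro t; rw [(hTd t).deriv]; positivity
  have hT1 : Monotone (fun t => t - T t) := by
    refine monotone_of_deriv_nonneg
      (fun t => ((hasDerivAt_id t).sub (hTd t)).differentiableAt) ?_
    intro t
    have hd : deriv (fun t => t - T t) t = _ := ((hasDerivAt_id t).sub (hTd t)).deriv
    rw [hd]
    have : (1:ℝ) ≤ Real.cosh t ^ 2 := one_le_pow₀ (Real.one_le_cosh t)
    have := inv_le_one_of_one_le₀ this
    linarith
  have hTle : ∀ t, T t ≤ 1 := by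
    intro t
    rw [hT]
    exact (div_le_one (Real.cosh_pos t)).2 (Real.sinh_lt_cosh t).le
  set b := δ / 2 with hb
  have hb0 : 0 < b := by positivity
  have hTneg : T (-b) = - T b := by simp [hT, neg_div]
  have hT0 : T 0 = 0 := by simp [hT]
  set a := T b with ha
  have ha0 : 0 < a := by
    have : 0 < Real.sinh b := Real.sinh_pos_iff.2 hb0
    exact div_pos this (Real.cosh_pos b)
  set m := 2 * a ^ 2 * (Real.cosh 1 ^ 2)⁻¹ with hm
  have hm0 : 0 < m := by have := Real.cosh_pos 1; positivity
  obtain ⟨k, hk1, hkb, hkm⟩ : ∃ k : ℝ, 1 < k ∧ 1 / b < k ∧ 5 * C ^ 2 / m < k := by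
    refine ⟨max 1 (max (1 / b) (5 * C ^ 2 / m)) + 1, ?_, ?_, ?_⟩
    · have := le_max_left 1 (max (1 / b) (5 * C ^ 2 / m)); linarith
    · have := le_max_right 1 (max (1 / b) (5 * C ^ 2 / m))
      have := le_max_left (1 / b) (5 * C ^ 2 / m); linarith
    · have := le_max_right 1 (max (1 / b) (5 * C ^ 2 / m))
      have := le_max_right (1 / b) (5 * C ^ 2 / m); linarith
  have hk0 : 0 < k := by linarith
  have hkb' : 1 < k * b := by rwa [div_lt_iff₀ hb0] at hkb
  set v : ℝ → ℝ := fun t => T t + a with hv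
  set φ : ℝ → ℝ := fun t => S (k * (t + b)) * S (2 - t / k) with hφ
  have hφC : ContDiff ℝ (⊤ : ℕ∞) φ := by
    refine (hSC.comp (by fun_prop)).mul (hSC.comp (by fun_prop))
  have hvC : ContDiff ℝ (⊤ : ℕ∞) v := hTC.add contDiff_const
  set φ' : ℝ → ℝ := fun t => deriv S (k * (t + b)) * k * S (2 - t / k)
    + S (k * (t + b)) * (deriv S (2 - t / k) * (-(1 / k))) with hφ'
  have hSd : ∀ x, HasDerivAt S (deriv S x) x := fun x =>
    (hSC.differentiable (by simp) x).hasDerivAt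
  have hφd : ∀ t, HasDerivAt φ (φ' t) t := by
    intro t
    have h1 : HasDerivAt (fun t => k * (t + b)) k t := by
      simpa using ((hasDerivAt_id t).add_const b).const_mul k
    have h2 : HasDerivAt (fun t => 2 - t / k) (-(1 / k)) t := by
      simpa using ((hasDerivAt_id t).div_const k).const_sub 2
    exact ((hSd _).comp t h1).mul ((hSd _).comp t h2)
  have hvd : ∀ t, HasDerivAt v ((Real.cosh t ^ 2)⁻¹) t := fun t => (hTd t).add_const a
  -- the support of the cutoff
  have hφsupp : Function.support φ ⊆ Icc (-b) (2 * k) := by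
    intro t ht
    by_contra hcon
    apply ht
    rw [mem_Icc, not_and_or, not_le, not_le] at hcon
    rcases hcon with h | h
    · have : S (k * (t + b)) = 0 :=
        Real.smoothTransition.zero_of_nonpos (by nlinarith)
      simp [hφ, this]
    · have : S (2 - t / k) = 0 := by
        apply Real.smoothTransition.zero_of_nonpos
        have : 2 ≤ t / k := by rw [le_div_iff₀ hk0]; linarith
        linarith
      simp [hφ, this]
  have hφt : tsupport φ ⊆ Icc (-b) (2 * k) := closure_minimal hφsupp isClosed_Icc
  have hφc : HasCompactSupport φ := isCompact_Icc.of_isClosed_subset (isClosed_tsupport φ) hφt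
  set g : ℝ → ℝ := fun t => φ t * v t with hg
  have hgsub : Function.support g ⊆ Function.support φ := by
    intro t ht h; apply ht; simp [hg, h]
  have hgC : ContDiff ℝ (⊤ : ℕ∞) g := hφC.mul hvC
  have hgc : HasCompactSupport g := hφc.mono hgsub
  refine ⟨g, hgC, hgc, ?_, ?_⟩
  · refine (closure_mono hgsub).trans (hφt.trans ?_)
    intro t ht
    have := ht.1
    simp only [mem_Ioi]; linarith
  have hgd : ∀ t, HasDerivAt g (φ' t * v t + φ t * (Real.cosh t ^ 2)⁻¹) t :=
    fun t => (hφd t).mul (hvd t)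
  -- the total derivative
  set H : ℝ → ℝ := fun t => φ t ^ 2 * (v t * (Real.cosh t ^ 2)⁻¹) with hH
  have hHC : ContDiff ℝ 1 H := by
    refine ContDiff.mul ((hφC.of_le (by exact_mod_cast le_top)).pow 2)
      ((hvC.of_le (by exact_mod_cast le_top)).mul ?_)
    exact (Real.contDiff_cosh.pow 2).inv hcosh
  have hHc : HasCompactSupport H := by
    refine hφc.mono ?_
    intro t ht h; apply ht; simp [hH, h]
  have hHi : Integrable (deriv H) :=
    (hHC.continuous_deriv le_rfl).integrable_of_hasCompactSupport hHc.deriv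
  have hH0 : ∫ t, deriv H t = 0 :=
    integral_eq_zero_of_hasDerivAt_of_integrable
      (fun x => (hHC.differentiable one_ne_zero x).hasDerivAt) hHi
      (hHC.continuous.integrable_of_hasCompactSupport hHc)
  have hHd : ∀ t, deriv H t = 2 * φ t * φ' t * (v t * (Real.cosh t ^ 2)⁻¹)
      + φ t ^ 2 * (((Real.cosh t ^ 2)⁻¹) ^ 2 - 2 * (Real.cosh t ^ 2)⁻¹ * T t * v t) := by
    intro t
    have h1 := ((hφd t).pow 2).mul ((hvd t).mul (((Real.hasDerivAt_cosh t).pow 2).inv (hcosh t)))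
    have h2 : deriv H t = _ := h1.deriv
    rw [h2]
    have hc0 := Real.cosh_pos t
    simp only [Pi.mul_apply, Pi.inv_apply, Pi.pow_apply, hT]
    field_simp
    push_cast
    ring
  have hid : ∀ t, (deriv g t) ^ 2 - 2 * (Real.cosh t ^ 2)⁻¹ * (g t) ^ 2 =
      deriv H t + ((φ' t * v t) ^ 2 - 2 * a * (Real.cosh t ^ 2)⁻¹ * φ t ^ 2 * v t) := by
    intro t
    rw [(hgd t).deriv, hHd t]
    simp only [hg, hv]
    ring
  have hQi : Integrable (fun t => (deriv g t) ^ 2 - 2 * (Real.cosh t ^ 2)⁻¹ * (g t) ^ 2) := by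
    refine Continuous.integrable_of_hasCompactSupport ?_ ?_
    · have h1 := hgC.continuous_deriv (by simp)
      have h2 := hgC.continuous
      have h3 : Continuous fun t => (Real.cosh t ^ 2)⁻¹ :=
        (Real.continuous_cosh.pow 2).inv₀ hcosh
      fun_prop
    · refine hgc.mono' ?_
      intro x hx
      by_contra hx'
      apply hx
      have h1 : g x = 0 := image_eq_zero_of_notMem_tsupport hx'
      have h2 : deriv g x = 0 := by
        by_contra hne
        exact hx' (support_deriv_subset hne)
      simp [h1, h2]
  -- the upper bound
  set A := Icc (-b) (-b + 1 / k) with hA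
  set B := Icc k (2 * k) with hB
  set D := Icc (0:ℝ) 1 with hD
  have hik : 0 < 1 / k := by positivity
  have hikb : 1 / k < b := by rw [div_lt_iff₀ hk0]; linarith
  have hS01 : ∀ x, |S x| ≤ 1 := fun x => by
    rw [abs_of_nonneg (Real.smoothTransition.nonneg x)]
    exact Real.smoothTransition.le_one x
  have hbound1 : ∀ t, (φ' t * v t) ^ 2 ≤
      A.indicator (fun _ => C ^ 2) t + B.indicator (fun _ => 4 * C ^ 2 / k ^ 2) t := by
    intro t
    have hiA : 0 ≤ A.indicator (fun _ => C ^ 2) t := indicator_nonneg (fun _ _ => by positivity) t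
    have hiB : 0 ≤ B.indicator (fun _ => 4 * C ^ 2 / k ^ 2) t :=
      indicator_nonneg (fun _ _ => by positivity) t
    by_cases htA : t ∈ A
    · have h2 : deriv S (2 - t / k) = 0 := by
        apply hSr
        have : t / k < 1 := by
          rw [div_lt_one hk0]; have := htA.2; linarith
        linarith
      have hv0 : 0 ≤ v t := by
        have := hTmono htA.1
        simp only [hv]; linarith
      have hv1 : v t ≤ 1 / k := by
        have h3 : -b - T (-b) ≤ t - T t := hT1 htA.1
        have := htA.2
        simp only [hv]; linarith
      have hp : |φ' t| ≤ C * k := by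
        simp only [hφ', h2]
        rw [zero_mul, mul_zero, add_zero, abs_mul, abs_mul, abs_of_pos hk0]
        calc _ ≤ C * k * 1 := by
              gcongr
              · exact hC _
              · exact hS01 _
          _ = _ := by ring
      have : |φ' t * v t| ≤ C := by
        rw [abs_mul, abs_of_nonneg hv0]
        calc _ ≤ C * k * (1 / k) := by gcongr
          _ = C := by field_simp
      have := sq_le_sq' (abs_le.1 this).1 (abs_le.1 this).2
      rw [indicator_of_mem htA]
      linarith
    · have h1 : deriv S (k * (t + b)) = 0 := by
        rw [hA, mem_Icc, not_and_or, not_le, not_le] at htA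
        rcases htA with h | h
        · exact hSl _ (by nlinarith)
        · apply hSr
          have : 1 / k < t + b := by linarith
          rw [div_lt_iff₀ hk0] at this
          linarith
      by_cases htB : t ∈ B
      · have hv0 : 0 ≤ v t := by
          have := hTmono (show 0 ≤ t by have := htB.1; linarith)
          simp only [hv]; linarith
        have hv1 : v t ≤ 2 := by
          have := hTle t
          have := hTle b
          simp only [hv]; linarith
        have hp : |φ' t| ≤ C / k := by
          simp only [hφ', h1]
          rw [zero_mul, zero_mul, zero_add, abs_mul, abs_mul, abs_neg, abs_of_pos hik]
          calc _ ≤ 1 * (C * (1 / k)) := by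
                gcongr
                · exact hS01 _
                · exact hC _
            _ = _ := by ring
        have : |φ' t * v t| ≤ C / k * 2 := by
          rw [abs_mul, abs_of_nonneg hv0]
          gcongr
        have := sq_le_sq' (abs_le.1 this).1 (abs_le.1 this).2
        rw [indicator_of_mem htB]
        have h4 : (C / k * 2) ^ 2 = 4 * C ^ 2 / k ^ 2 := by ring
        linarith
      · have h2 : deriv S (2 - t / k) = 0 := by
          rw [hB, mem_Icc, not_and_or, not_le, not_le] at htB
          rcases htB with h | h
          · apply hSr
            have : t / k < 1 := by rwa [div_lt_one hk0]
            linarith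
          · apply hSl
            have : 2 < t / k := by rwa [lt_div_iff₀ hk0]
            linarith
        have : φ' t = 0 := by simp [hφ', h1, h2]
        rw [this]
        simp only [zero_mul, ne_eq, OfNat.ofNat_ne_zero, not_false_eq_true, zero_pow]
        linarith
  have hbound2 : ∀ t, D.indicator (fun _ => m) t ≤
      2 * a * (Real.cosh t ^ 2)⁻¹ * φ t ^ 2 * v t := by
    intro t
    by_cases htD : t ∈ D
    · rw [indicator_of_mem htD]
      have e1 : φ t = 1 := by
        have p1 : S (k * (t + b)) = 1 :=
          Real.smoothTransition.one_of_one_le (by have := htD.1; nlinarith)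
        have p2 : S (2 - t / k) = 1 := by
          apply Real.smoothTransition.one_of_one_le
          have : t / k ≤ 1 := by rw [div_le_one hk0]; have := htD.2; linarith
          linarith
        simp [hφ, p1, p2]
      have e2 : a ≤ v t := by
        have := hTmono htD.1
        simp only [hv]; linarith
      have e3 : (Real.cosh 1 ^ 2)⁻¹ ≤ (Real.cosh t ^ 2)⁻¹ := by
        have := Real.cosh_pos t
        have : Real.cosh t ≤ Real.cosh 1 := by
          rw [Real.cosh_le_cosh, abs_of_nonneg htD.1, abs_one]; exact htD.2
        gcongr
      rw [e1]
      calc m = 2 * a * (Real.cosh 1 ^ 2)⁻¹ * 1 ^ 2 * a := by rw [hm]; ring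
        _ ≤ _ := by gcongr
    · rw [indicator_of_notMem htD]
      by_cases hp : φ t = 0
      · simp [hp]
      · have := hTmono (hφsupp hp).1
        have : 0 ≤ v t := by simp only [hv]; linarith
        have := Real.cosh_pos t
        positivity
  have hAi : Integrable (A.indicator (fun _ => C ^ 2)) := by
    rw [integrable_indicator_iff measurableSet_Icc]
    exact continuousOn_const.integrableOn_Icc
  have hBi : Integrable (B.indicator (fun _ => 4 * C ^ 2 / k ^ 2)) := by
    rw [integrable_indicator_iff measurableSet_Icc]
    exact continuousOn_const.integrableOn_Icc
  have hDi : Integrable (D.indicator (fun _ => m)) := by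
    rw [integrable_indicator_iff measurableSet_Icc]
    exact continuousOn_const.integrableOn_Icc
  have hle : ∫ t : ℝ, ((deriv g t) ^ 2 - 2 * (Real.cosh t ^ 2)⁻¹ * (g t) ^ 2) ≤
      ∫ t : ℝ, (deriv H t + (A.indicator (fun _ => C ^ 2) t
        + B.indicator (fun _ => 4 * C ^ 2 / k ^ 2) t - D.indicator (fun _ => m) t)) := by
    refine integral_mono hQi (hHi.add ((hAi.add hBi).sub hDi)) ?_
    intro t
    have h1 := hbound1 t
    have h2 := hbound2 t
    have h3 := hid t
    simp only at h3 ⊢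
    linarith
  refine hle.trans_lt ?_
  have e1 : ∫ t, A.indicator (fun _ => C ^ 2) t = C ^ 2 / k := by
    rw [integral_indicator measurableSet_Icc, setIntegral_const, Measure.real,
      Real.volume_Icc, ENNReal.toReal_ofReal (by linarith)]
    simp only [smul_eq_mul]; ring
  have e2 : ∫ t, B.indicator (fun _ => 4 * C ^ 2 / k ^ 2) t = 4 * C ^ 2 / k := by
    rw [integral_indicator measurableSet_Icc, setIntegral_const, Measure.real,
      Real.volume_Icc, ENNReal.toReal_ofReal (by linarith)]
    simp only [smul_eq_mul]; field_simp; ring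
  have e3 : ∫ t, D.indicator (fun _ => m) t = m := by
    rw [integral_indicator measurableSet_Icc, setIntegral_const, Measure.real,
      Real.volume_Icc]
    simp
  have hsplit : ∫ t : ℝ, (deriv H t + (A.indicator (fun _ => C ^ 2) t
        + B.indicator (fun _ => 4 * C ^ 2 / k ^ 2) t - D.indicator (fun _ => m) t)) =
      0 + (C ^ 2 / k + 4 * C ^ 2 / k - m) := by
    refine (integral_add hHi ((hAi.add hBi).sub hDi)).trans ?_
    rw [hH0]
    congr 1
    refine (integral_sub (hAi.add hBi) hDi).trans ?_
    rw [e3]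
    congr 1
    refine (integral_add hAi hBi).trans ?_
    rw [e1, e2]
  rw [hsplit]
  rw [div_lt_iff₀ hm0] at hkm
  have : 5 * C ^ 2 / k < m := by rw [div_lt_iff₀ hk0]; linarith
  have h5 : C ^ 2 / k + 4 * C ^ 2 / k = 5 * C ^ 2 / k := by ring
  linarith

/-- Lindelöf's property for the Euclidean catenoid: the upper half-catenoid `t > 0` is weakly
stable, while every strictly larger rotation-invariant domain `t > −δ` is unstable. -/
theorem stmt3 :
    (∀ f : ℝ → ℝ, ContDiff ℝ (⊤ : ℕ∞) f → HasCompactSupport f →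
      tsupport f ⊆ Set.Ioi (0:ℝ) →
      0 ≤ ∫ t in Set.Ioi (0:ℝ), ((deriv f t) ^ 2 - 2 * (Real.cosh t ^ 2)⁻¹ * (f t) ^ 2)) ∧
    (∀ δ : ℝ, 0 < δ → ∃ g : ℝ → ℝ, ContDiff ℝ (⊤ : ℕ∞) g ∧ HasCompactSupport g ∧
      tsupport g ⊆ Set.Ioi (-δ) ∧
      (∫ t : ℝ, ((deriv g t) ^ 2 - 2 * (Real.cosh t ^ 2)⁻¹ * (g t) ^ 2)) < 0) := by
  exact ⟨aux_part1, aux_part2⟩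
end

section
/- Let n ≥ 2, let T_n = ∫₁^∞ (u^{2n−2} − 1)^{−1/2} du, and let c = c_n : (−T_n, T_n) → ℝ be the maximal solution of c·c'' = (n−1)(1 + c'²), c(0) = 1, c'(0) = 0. Define v(t) = c'(t)·(1 + c'(t)²)^{−1/2} and e(t) = −c(t)^{2−n} + t·v(t). Then: (i) v is odd with v(t) = sgn(t)·(1 − c(t)^{2−2n})^{1/2}, v(0) = 0, and v(t) → 1 as t → T_n; (ii) e is even, e(0) = −1, and if n ≥ 3 then e(t) → T_n as t → T_n; (iii) e has exactly one zero z in the open interval (0, T_n). -/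
open Real MeasureTheory Set Filter Topology ENNReal

/-- Properties of the vertical Jacobi field `v = c'(1+c'²)^{−1/2}` and the variation Jacobi
field `e = −c^{2−n} + t·v` on the `n`-catenoid in `ℝ^{n+1}`: `v` is odd with the explicit
formula `sgn(t)·(1 − c^{2−2n})^{1/2}` and tends to `1` at `T_n`; `e` is even, `e(0) = −1`,
tends to `T_n` (when `n ≥ 3`), and has exactly one zero in `(0, T_n)`. -/
theorem stmt7 (n : ℕ) (hn : 2 ≤ n)
    (T : ℝ≥0∞)
    (hT : T = ∫⁻ u in Set.Ioi (1:ℝ), ENNReal.ofReal ((u ^ (2*n-2) - 1) ^ (-(1:ℝ)/2)))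
    (I : Set ℝ) (hI : I = {t : ℝ | ENNReal.ofReal |t| < T})
    (c : ℝ → ℝ)
    (hc : ContDiffOn ℝ (⊤ : ℕ∞) c I)
    (hceven : ∀ t ∈ I, c (-t) = c t)
    (hc0 : c 0 = 1) (hc0' : deriv c 0 = 0)
    (hode : ∀ t ∈ I, c t * deriv (deriv c) t = (n - 1 : ℝ) * (1 + (deriv c t) ^ 2))
    (v e : ℝ → ℝ)
    (hv : ∀ t, v t = deriv c t / Real.sqrt (1 + (deriv c t) ^ 2))
    (he : ∀ t, e t = -(c t ^ ((2:ℤ) - n)) + t * v t) :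
    (∀ t ∈ I, v (-t) = -v t) ∧
    (∀ t ∈ I, v t = Real.sign t * Real.sqrt (1 - c t ^ ((2:ℤ) - 2*n))) ∧
    v 0 = 0 ∧
    (T = ⊤ → Filter.Tendsto v Filter.atTop (𝓝 1)) ∧
    (T ≠ ⊤ → Filter.Tendsto v (𝓝[<] T.toReal) (𝓝 1)) ∧
    (∀ t ∈ I, e (-t) = e t) ∧
    e 0 = -1 ∧
    (3 ≤ n → Filter.Tendsto e (𝓝[<] T.toReal) (𝓝 T.toReal)) ∧
    (∃ z ∈ I, 0 < z ∧ e z = 0 ∧ ∀ t ∈ I, 0 < t → e t = 0 → t = z) := by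
  obtain ⟨m, rfl⟩ : ∃ m, n = m + 2 := ⟨n - 2, by omega⟩
  have hexp : 2 * (m + 2) - 2 = 2 * m + 2 := by omega
  rw [hexp] at hT
  have memI : ∀ t, t ∈ I ↔ ENNReal.ofReal |t| < T := by intro t; rw [hI]; rfl
  have hIopen : IsOpen I := by
    rw [hI]
    exact isOpen_lt (ENNReal.continuous_ofReal.comp continuous_abs) continuous_const
  have gpos : ∀ u : ℝ, 1 < u → 0 < (u ^ (2 * m + 2) - 1) ^ (-(1:ℝ)/2) := by
    intro u hu
    apply Real.rpow_pos_of_pos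
    have := one_lt_pow₀ hu (n := 2 * m + 2) (by omega)
    linarith
  have gmeas : Measurable (fun u : ℝ => ENNReal.ofReal ((u ^ (2 * m + 2) - 1) ^ (-(1:ℝ)/2))) := by
    fun_prop
  have tailpos : ∀ M : ℝ, 1 ≤ M →
      0 < ∫⁻ u in Set.Ioi M, ENNReal.ofReal ((u ^ (2 * m + 2) - 1) ^ (-(1:ℝ)/2)) := by
    intro M hM
    rw [setLIntegral_pos_iff gmeas]
    have hsub : Set.Ioi M ⊆ Function.support
        (fun u : ℝ => ENNReal.ofReal ((u ^ (2 * m + 2) - 1) ^ (-(1:ℝ)/2))) ∩ Set.Ioi M := by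
      intro u hu
      refine ⟨?_, hu⟩
      have := gpos u (lt_of_le_of_lt hM hu)
      simp only [Function.mem_support, ne_eq, ENNReal.ofReal_eq_zero, not_le]
      exact this
    refine lt_of_lt_of_le ?_ (measure_mono hsub)
    simp
  have hTpos : 0 < T := by rw [hT]; exact tailpos 1 le_rfl
  have h0I : (0:ℝ) ∈ I := by rw [memI]; simpa using hTpos
  have hdown : ∀ t ∈ I, ∀ s, |s| ≤ |t| → s ∈ I := by
    intro t ht s hs
    rw [memI] at *
    exact lt_of_le_of_lt (ENNReal.ofReal_le_ofReal hs) ht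
  have hneg : ∀ t ∈ I, -t ∈ I := fun t ht => hdown t ht _ (by simp)
  have hOC : I.OrdConnected := by
    refine ⟨fun x hx y hy z hz => ?_⟩
    rcases le_total |x| |y| with h | h
    · exact hdown y hy z ((abs_le_max_abs_abs hz.1 hz.2).trans (by simp [h]))
    · exact hdown x hx z ((abs_le_max_abs_abs hz.1 hz.2).trans (by simp [h]))
  have hconv : Convex ℝ I := hOC.convex
  have hpre : IsPreconnected I := hconv.isPreconnected
  have hcd : ∀ t ∈ I, HasDerivAt c (deriv c t) t := by
    intro t ht
    exact ((hc.differentiableOn (by simp)).differentiableAt (hIopen.mem_nhds ht)).hasDerivAt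
  have hc1 : ContDiffOn ℝ 1 (deriv c) I := hc.deriv_of_isOpen hIopen (by norm_cast)
  have hcdd : ∀ t ∈ I, HasDerivAt (deriv c) (deriv (deriv c) t) t := by
    intro t ht
    exact ((hc1.differentiableOn (by simp)).differentiableAt (hIopen.mem_nhds ht)).hasDerivAt
  have hcc : ContinuousOn c I := hc.continuousOn
  have hcdc : ContinuousOn (deriv c) I := hc1.continuousOn
  have hode' : ∀ t ∈ I, c t * deriv (deriv c) t = (m + 1 : ℝ) * (1 + (deriv c t) ^ 2) := by
    intro t ht; rw [hode t ht]; push_cast; ring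
  have hcne : ∀ t ∈ I, c t ≠ 0 := by
    intro t ht h0
    have := hode' t ht
    rw [h0, zero_mul] at this
    have : 0 < (m + 1 : ℝ) * (1 + (deriv c t) ^ 2) := by positivity
    linarith
  have hcpos : ∀ t ∈ I, 0 < c t := by
    intro t ht
    by_contra hcon
    push Not at hcon
    obtain ⟨s, hs, hs0⟩ := hpre.intermediate_value ht h0I hcc ⟨hcon, by rw [hc0]; norm_num⟩
    exact hcne s hs hs0
  have hcddpos : ∀ t ∈ I, 0 < deriv (deriv c) t := by
    intro t ht
    have h1 := hode' t ht
    have h2 : 0 < (m + 1 : ℝ) * (1 + (deriv c t) ^ 2) := by positivity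
    rw [← h1] at h2
    exact (pos_iff_pos_of_mul_pos h2).1 (hcpos t ht)
  have hdmono : StrictMonoOn (deriv c) I :=
    strictMonoOn_of_deriv_pos hconv hcdc (fun t ht => hcddpos t (interior_subset ht))
  have hdpos : ∀ t ∈ I, 0 < t → 0 < deriv c t := by
    intro t ht h
    have := hdmono h0I ht h
    rwa [hc0'] at this
  have hE : ∀ t ∈ I, 1 + (deriv c t) ^ 2 = c t ^ (2 * m + 2) := by
    have hder : ∀ t ∈ I, HasDerivAt (fun t => (1 + (deriv c t) ^ 2) / c t ^ (2 * m + 2)) 0 t := by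
      intro t ht
      have h1 := (((hcdd t ht).pow 2).const_add 1).div ((hcd t ht).pow (2 * m + 2))
        (pow_ne_zero _ (hcne t ht))
      refine HasDerivAt.congr_deriv h1 ?_
      have h2 := hode' t ht
      have h3 : (((2:ℕ):ℝ) * deriv c t ^ (2 - 1) * deriv (deriv c) t * c t ^ (2 * m + 2) -
          (1 + deriv c t ^ 2) * (((2 * m + 2 : ℕ) : ℝ) * c t ^ (2 * m + 2 - 1) * deriv c t)) = 0 := by
        push_cast
        rw [show 2 * m + 2 = 2 * m + 1 + 1 from rfl,
          pow_succ (c t) (2 * m + 1)]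
        linear_combination (2 * deriv c t * c t ^ (2 * m + 1)) * h2
      have h4 : (((2:ℕ):ℝ) * deriv c t ^ (2 - 1) * deriv (deriv c) t * c t ^ (2 * m + 2) -
          (1 + deriv c t ^ 2) * (((2 * m + 2 : ℕ) : ℝ) * c t ^ (2 * m + 2 - 1) * deriv c t))
          / (c t ^ (2 * m + 2)) ^ 2 = 0 := by rw [h3, zero_div]
      exact h4
    intro t ht
    have := hIopen.is_const_of_deriv_eq_zero hpre
      (fun t ht => (hder t ht).differentiableAt.differentiableWithinAt)
      (fun t ht => (hder t ht).deriv) ht h0I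
    simp only [hc0, hc0'] at this
    have hp : c t ^ (2 * m + 2) ≠ 0 := pow_ne_zero _ (hcne t ht)
    field_simp at this
    simpa using this
  have hJ : Convex ℝ (I ∩ Set.Ici 0) := hconv.inter (convex_Ici 0)
  have hJi : ∀ t ∈ interior (I ∩ Set.Ici (0:ℝ)), t ∈ I ∧ 0 < t := by
    intro t ht
    rw [interior_inter, interior_Ici] at ht
    exact ⟨interior_subset ht.1, ht.2⟩
  have hcmono : StrictMonoOn c (I ∩ Set.Ici 0) :=
    strictMonoOn_of_deriv_pos hJ (hcc.mono Set.inter_subset_left)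
      (fun t ht => hdpos t (hJi t ht).1 (hJi t ht).2)
  have hc1lt : ∀ t ∈ I, 0 < t → 1 < c t := by
    intro t ht h
    have := hcmono ⟨h0I, Set.self_mem_Ici⟩ ⟨ht, h.le⟩ h
    rwa [hc0] at this
  have hzp1 : ∀ t, c t ^ ((2:ℤ) - ((m + 2 : ℕ) : ℤ)) = (c t ^ m)⁻¹ := by
    intro t
    rw [show (2:ℤ) - ((m + 2 : ℕ) : ℤ) = -(m : ℤ) by push_cast; ring, zpow_neg, zpow_natCast]
  have hzp2 : ∀ t, c t ^ ((2:ℤ) - 2 * ((m + 2 : ℕ) : ℤ)) = (c t ^ (2 * m + 2))⁻¹ := by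
    intro t
    rw [show (2:ℤ) - 2 * ((m + 2 : ℕ) : ℤ) = -((2 * m + 2 : ℕ) : ℤ) by push_cast; ring,
      zpow_neg, zpow_natCast]
  have hdodd : ∀ t ∈ I, deriv c (-t) = - deriv c t := by
    intro t ht
    have h1 : (fun s => c (-s)) =ᶠ[𝓝 t] c := by
      filter_upwards [hIopen.mem_nhds ht] with s hs using hceven s hs
    have h2 := h1.deriv_eq
    rw [deriv_comp_neg] at h2
    linarith
  have hvodd : ∀ t ∈ I, v (-t) = -v t := by
    intro t ht
    rw [hv, hv, hdodd t ht, neg_sq, neg_div]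
  have hv0 : v 0 = 0 := by rw [hv, hc0']; simp
  have hvp : ∀ t ∈ I, 0 < t → v t = Real.sqrt (1 - (c t ^ (2 * m + 2))⁻¹) := by
    intro t ht h
    have hd := hdpos t ht h
    rw [hv]
    symm
    rw [← hE t ht]
    have hp : 0 < 1 + deriv c t ^ 2 := by positivity
    rw [show 1 - (1 + deriv c t ^ 2)⁻¹ = deriv c t ^ 2 / (1 + deriv c t ^ 2) by
      field_simp; ring, Real.sqrt_div (sq_nonneg _), Real.sqrt_sq hd.le]
  have hvform : ∀ t ∈ I,
      v t = Real.sign t * Real.sqrt (1 - c t ^ ((2:ℤ) - 2 * ((m + 2 : ℕ) : ℤ))) := by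
    intro t ht
    rw [hzp2]
    rcases lt_trichotomy t 0 with h | h | h
    · have h1 := hvp (-t) (hneg t ht) (by linarith)
      rw [hvodd t ht, hceven t ht] at h1
      rw [Real.sign_of_neg h]
      linarith
    · subst h; simp [hv0]
    · rw [Real.sign_of_pos h, one_mul, hvp t ht h]
  have heven : ∀ t ∈ I, e (-t) = e t := by
    intro t ht
    rw [he, he, hvodd t ht, hceven t ht]; ring
  have he0 : e 0 = -1 := by rw [he, hc0]; simp
  -- monotonicity of v and e
  have hvpos : ∀ t ∈ I, 0 < t → 0 < v t := by
    intro t ht h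
    have := hdpos t ht h
    rw [hv]; positivity
  have hvmono : ∀ s ∈ I, ∀ t ∈ I, 0 < s → s ≤ t → v s ≤ v t := by
    intro s hs t ht h hst
    rw [hvp s hs h, hvp t ht (by linarith)]
    apply Real.sqrt_le_sqrt
    have := hcmono.monotoneOn ⟨hs, h.le⟩ ⟨ht, (h.trans_le hst).le⟩ hst
    have := hcpos s hs
    gcongr
  have hemono : ∀ s ∈ I, ∀ t ∈ I, 0 < s → s < t → e s < e t := by
    intro s hs t ht h hst
    rw [he, he, hzp1, hzp1]
    have h1 := hcmono.monotoneOn ⟨hs, h.le⟩ ⟨ht, (h.trans hst).le⟩ hst.le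
    have h2 := hcpos s hs
    have h3 : (c t ^ m)⁻¹ ≤ (c s ^ m)⁻¹ := by gcongr
    have h4 := hvmono s hs t ht h hst.le
    have h5 := hvpos s hs h
    have h6 : s * v s < t * v t := by nlinarith
    linarith
  have hvcont : ContinuousOn v I := by
    have : ContinuousOn (fun t => deriv c t / Real.sqrt (1 + (deriv c t) ^ 2)) I := by
      apply hcdc.div
      · fun_prop
      · intro t _; positivity
    exact this.congr (fun t _ => hv t)
  have hecont : ContinuousOn e I := by
    have : ContinuousOn (fun t => -((c t ^ m)⁻¹) + t * v t) I := by
      apply ContinuousOn.add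
      · exact ((hcc.pow m).inv₀ (fun t ht => pow_ne_zero _ (hcne t ht))).neg
      · exact continuousOn_id.mul hvcont
    exact this.congr (fun t _ => by rw [he, hzp1])
  -- unboundedness
  have hunb : ∀ M : ℝ, ∃ t ∈ I, 0 < t ∧ M < c t := by
    intro M
    by_cases hTtop : T = ⊤
    · have hall : ∀ t, t ∈ I := by intro t; rw [memI, hTtop]; exact ENNReal.ofReal_lt_top
      have hd1 := hdpos 1 (hall 1) one_pos
      obtain ⟨k, hk⟩ := exists_gt (max 1 (1 + (M / deriv c 1)))
      have hk1 : 1 < k := lt_of_le_of_lt (le_max_left _ _) hk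
      have hk2 : 1 + M / deriv c 1 < k := lt_of_le_of_lt (le_max_right _ _) hk
      refine ⟨k, hall k, by linarith, ?_⟩
      obtain ⟨x, hx, hx2⟩ := exists_deriv_eq_slope c hk1 (hcc.mono fun t _ => hall t)
        (fun t _ => (hcd t (hall t)).differentiableAt.differentiableWithinAt)
      have h3 := hdmono (hall 1) (hall x) hx.1
      have h4 := hc1lt 1 (hall 1) one_pos
      have hk3 : 0 < k - 1 := by linarith
      rw [hx2, lt_div_iff₀ hk3] at h3
      have h5 : M / deriv c 1 < k - 1 := by linarith
      rw [div_lt_iff₀ hd1] at h5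
      linarith
    · by_contra hcon
      push Not at hcon
      have hs : I ∩ Set.Ioi 0 = Set.Ioo 0 T.toReal := by
        ext t
        simp only [Set.mem_inter_iff, Set.mem_Ioi, Set.mem_Ioo, memI]
        constructor
        · rintro ⟨h1, h2⟩
          rw [abs_of_pos h2, ENNReal.ofReal_lt_iff_lt_toReal h2.le hTtop] at h1
          exact ⟨h2, h1⟩
        · rintro ⟨h2, h1⟩
          rw [abs_of_pos h2, ENNReal.ofReal_lt_iff_lt_toReal h2.le hTtop]
          exact ⟨h1, h2⟩
      have hcv := lintegral_image_eq_lintegral_abs_deriv_mul (s := I ∩ Set.Ioi 0) (f := c)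
        (f' := deriv c) (hIopen.inter isOpen_Ioi).measurableSet
        (fun t ht => (hcd t ht.1).hasDerivWithinAt)
        (hcmono.injOn.mono (Set.inter_subset_inter_right _ Set.Ioi_subset_Ici_self))
        (fun u : ℝ => ENNReal.ofReal ((u ^ (2 * m + 2) - 1) ^ (-(1:ℝ)/2)))
      have h1 : ∫⁻ x in I ∩ Set.Ioi 0, ENNReal.ofReal |deriv c x| *
          ENNReal.ofReal ((c x ^ (2 * m + 2) - 1) ^ (-(1:ℝ)/2)) = T := by
        rw [setLIntegral_congr_fun (g := fun _ => 1) (hIopen.inter isOpen_Ioi).measurableSet]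
        · rw [hs]; simp [hTtop]
        · intro t ht
          have hd := hdpos t ht.1 ht.2
          simp only
          rw [← hE t ht.1, add_sub_cancel_left, abs_of_pos hd, ← ENNReal.ofReal_mul hd.le,
            ← Real.rpow_natCast, ← Real.rpow_mul hd.le]
          norm_num
          rw [Real.rpow_neg_one, mul_inv_cancel₀ hd.ne']
      rw [h1] at hcv
      set M' := max M 1 with hM'
      have hsub : c '' (I ∩ Set.Ioi 0) ⊆ Set.Ioc 1 M' := by
        rintro _ ⟨t, ht, rfl⟩
        exact ⟨hc1lt t ht.1 ht.2, (hcon t ht.1 ht.2).trans (le_max_left _ _)⟩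
      have h2 := lintegral_mono_set (μ := volume)
        (f := (fun u : ℝ => ENNReal.ofReal ((u ^ (2 * m + 2) - 1) ^ (-(1:ℝ)/2)))) hsub
      rw [hcv] at h2
      have h3 := tailpos M' (le_max_right _ _)
      have h4 : T = (∫⁻ u in Set.Ioc 1 M', ENNReal.ofReal ((u ^ (2 * m + 2) - 1) ^ (-(1:ℝ)/2)))
          + ∫⁻ u in Set.Ioi M', ENNReal.ofReal ((u ^ (2 * m + 2) - 1) ^ (-(1:ℝ)/2)) := by
        rw [← lintegral_union measurableSet_Ioi (Set.Ioc_disjoint_Ioi le_rfl),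
          Set.Ioc_union_Ioi_eq_Ioi (le_max_right _ _)]
        exact hT
      have h5 : T < T + ∫⁻ u in Set.Ioi M', ENNReal.ofReal ((u ^ (2 * m + 2) - 1) ^ (-(1:ℝ)/2)) :=
        ENNReal.lt_add_right hTtop h3.ne'
      have h6 := add_le_add_left h2
        (∫⁻ u in Set.Ioi M', ENNReal.ofReal ((u ^ (2 * m + 2) - 1) ^ (-(1:ℝ)/2)))
      rw [← h4] at h6
      exact absurd (lt_of_lt_of_le h5 h6) (lt_irrefl _)
  -- limits along a filter
  have hlimc : ∀ L : Filter ℝ, (∀ s ∈ I, 0 < s → ∀ᶠ t in L, t ∈ I ∧ s ≤ t) →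
      Tendsto c L atTop := by
    intro L hL
    rw [tendsto_atTop]
    intro M
    obtain ⟨s, hs, hs0, hsM⟩ := hunb M
    filter_upwards [hL s hs hs0] with t ht
    exact hsM.le.trans (hcmono.monotoneOn ⟨hs, hs0.le⟩ ⟨ht.1, hs0.le.trans ht.2⟩ ht.2)
  have hlimv : ∀ L : Filter ℝ, (∀ s ∈ I, 0 < s → ∀ᶠ t in L, t ∈ I ∧ s ≤ t) →
      Tendsto v L (𝓝 1) := by
    intro L hL
    obtain ⟨s, hs, hs0, -⟩ := hunb 0
    have h1 : Tendsto (fun t => Real.sqrt (1 - (c t ^ (2 * m + 2))⁻¹)) L (𝓝 1) := by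
      have h2 := ((tendsto_pow_atTop (α := ℝ) (n := 2 * m + 2) (by omega)).comp
        (hlimc L hL)).inv_tendsto_atTop
      have h3 := (h2.const_sub 1).sqrt
      simpa using h3
    refine h1.congr' ?_
    filter_upwards [hL s hs hs0] with t ht
    exact (hvp t ht.1 (hs0.trans_le ht.2)).symm
  have hLtop : T = ⊤ → ∀ s ∈ I, 0 < s → ∀ᶠ t in atTop, t ∈ I ∧ s ≤ t := by
    intro h s _ _
    filter_upwards [eventually_ge_atTop s] with t ht
    exact ⟨by rw [memI, h]; exact ENNReal.ofReal_lt_top, ht⟩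
  have hLfin : T ≠ ⊤ → ∀ s ∈ I, 0 < s → ∀ᶠ t in 𝓝[<] T.toReal, t ∈ I ∧ s ≤ t := by
    intro h s hs hs0
    rw [memI, abs_of_pos hs0, ENNReal.ofReal_lt_iff_lt_toReal hs0.le h] at hs
    filter_upwards [Ioo_mem_nhdsLT hs] with t ht
    have ht0 : 0 < t := hs0.trans ht.1
    refine ⟨?_, ht.1.le⟩
    rw [memI, abs_of_pos ht0, ENNReal.ofReal_lt_iff_lt_toReal ht0.le h]
    exact ht.2
  -- finiteness of T for n ≥ 3
  have hTfin : 1 ≤ m → T ≠ ⊤ := by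
    intro hm hTtop
    have hall : ∀ t, t ∈ I := by intro t; rw [memI, hTtop]; exact ENNReal.ofReal_lt_top
    obtain ⟨s, hs, hs0, hs2⟩ := hunb 2
    have hge : ∀ t, s ≤ t → 2 ≤ c t := fun t ht =>
      hs2.le.trans (hcmono.monotoneOn ⟨hs, hs0.le⟩ ⟨hall t, hs0.le.trans ht⟩ ht)
    have hdd : ∀ t, HasDerivAt (fun t => (c t)⁻¹ + t / 2) (-deriv c t / c t ^ 2 + 1 / 2) t := by
      intro t
      exact ((hcd t (hall t)).inv (hcne t (hall t))).add ((hasDerivAt_id t).div_const 2)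
    have hanti : AntitoneOn (fun t => (c t)⁻¹ + t / 2) (Set.Ici s) := by
      apply antitoneOn_of_deriv_nonpos (convex_Ici s)
      · exact fun t _ => (hdd t).continuousAt.continuousWithinAt
      · exact fun t _ => (hdd t).differentiableAt.differentiableWithinAt
      · intro t ht
        rw [interior_Ici] at ht
        rw [(hdd t).deriv]
        have h2 := hge t (le_of_lt ht)
        have hd := hdpos t (hall t) (hs0.trans ht)
        have h3 : c t ^ 4 ≤ c t ^ (2 * m + 2) := pow_le_pow_right₀ (by linarith) (by omega)
        rw [← hE t (hall t)] at h3
        have h4 : c t ^ 2 / 2 ≤ deriv c t := by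
          refine (pow_le_pow_iff_left₀ (by positivity) hd.le two_ne_zero).1 ?_
          nlinarith [sq_nonneg (c t ^ 2), mul_self_nonneg (c t), mul_le_mul h2 h2 (by norm_num) (by linarith)]
        have h5 : 0 < c t ^ 2 := by positivity
        have h6 : 1 / 2 ≤ deriv c t / c t ^ 2 := by
          rw [le_div_iff₀ h5]; linarith
        rw [neg_div]; linarith
    have h1 := hanti (Set.self_mem_Ici) (show s + 2 ∈ Set.Ici s by simp) (by linarith)
    have h2 : 0 < (c (s + 2))⁻¹ := inv_pos.2 (hcpos _ (hall _))
    have h3 : (c s)⁻¹ < 1 := inv_lt_one_of_one_lt₀ (by linarith)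
    simp only at h1
    linarith
  -- infiniteness of T for n = 2
  have hTinf : m = 0 → T = ⊤ := by
    intro hm
    by_contra hTtop
    have hdd : ∀ t ∈ I, HasDerivAt (fun t => c t * Real.exp (-t))
        (deriv c t * Real.exp (-t) + c t * (Real.exp (-t) * (-1))) t := by
      intro t ht
      exact (hcd t ht).mul ((hasDerivAt_neg t).exp)
    have hanti : AntitoneOn (fun t => c t * Real.exp (-t)) (I ∩ Set.Ici 0) := by
      apply antitoneOn_of_deriv_nonpos hJ
      · exact fun t ht => (hdd t ht.1).continuousAt.continuousWithinAt
      · exact fun t ht => (hdd t (hJi t ht).1).differentiableAt.differentiableWithinAt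
      · intro t ht
        have ht' := (hJi t ht).1
        rw [(hdd t ht').deriv]
        have h1 := hE t ht'
        rw [hm] at h1
        have h2 : deriv c t ≤ c t := by
          refine (pow_le_pow_iff_left₀ (hdpos t ht' (hJi t ht).2).le (hcpos t ht').le two_ne_zero).1 ?_
          simp only [mul_zero, zero_add] at h1
          linarith
        have := Real.exp_pos (-t)
        nlinarith
    obtain ⟨t, ht, ht0, htM⟩ := hunb (Real.exp T.toReal)
    have h1 := hanti ⟨h0I, Set.self_mem_Ici⟩ ⟨ht, ht0.le⟩ ht0.le
    simp only [hc0, neg_zero, Real.exp_zero, mul_one] at h1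
    rw [memI, abs_of_pos ht0, ENNReal.ofReal_lt_iff_lt_toReal ht0.le hTtop] at ht
    rw [Real.exp_neg, ← div_eq_mul_inv, div_le_one (Real.exp_pos t)] at h1
    have := Real.exp_lt_exp.2 ht
    linarith
  have helim : 1 ≤ m → Tendsto e (𝓝[<] T.toReal) (𝓝 T.toReal) := by
    intro hm
    have hfin := hTfin hm
    have h1 := ((tendsto_pow_atTop (α := ℝ) (n := m) (by omega)).comp
        (hlimc _ (hLfin hfin))).inv_tendsto_atTop
    have h2 : Tendsto (fun t : ℝ => t) (𝓝[<] T.toReal) (𝓝 T.toReal) :=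
      tendsto_id.mono_left nhdsWithin_le_nhds
    have h3 := h1.neg.add (h2.mul (hlimv _ (hLfin hfin)))
    simp only [neg_zero, zero_add, mul_one] at h3
    refine h3.congr (fun t => ?_)
    rw [he, hzp1]; rfl
  have hexpos : ∃ t ∈ I, 0 < t ∧ 0 < e t := by
    by_cases hTtop : T = ⊤
    · have hall : ∀ t, t ∈ I := by intro t; rw [memI, hTtop]; exact ENNReal.ofReal_lt_top
      have hv1 := hvpos 1 (hall 1) one_pos
      obtain ⟨k, hk⟩ := exists_gt (max 1 (1 / v 1))
      have hk1 : 1 < k := lt_of_le_of_lt (le_max_left _ _) hk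
      have hk2 : 1 / v 1 < k := lt_of_le_of_lt (le_max_right _ _) hk
      have hk0 : 0 < k := by linarith
      refine ⟨k, hall k, hk0, ?_⟩
      rw [he, hzp1]
      have h1 := hvmono 1 (hall 1) k (hall k) one_pos hk1.le
      rw [div_lt_iff₀ hv1] at hk2
      have h2 : (c k ^ m)⁻¹ ≤ 1 :=
        inv_le_one_of_one_le₀ (one_le_pow₀ (hc1lt k (hall k) hk0).le)
      nlinarith
    · have hm : 1 ≤ m := by
        rcases Nat.eq_zero_or_pos m with h | h
        · exact absurd (hTinf h) hTtop
        · exact h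
      have hTr : 0 < T.toReal := ENNReal.toReal_pos hTpos.ne' hTtop
      obtain ⟨s, hs, hs0, -⟩ := hunb 0
      obtain ⟨t, ht, ht'⟩ := (((helim hm).eventually (lt_mem_nhds hTr)).and
        (hLfin hTtop s hs hs0)).exists
      exact ⟨t, ht'.1, hs0.trans_le ht'.2, ht⟩
  refine ⟨hvodd, hvform, hv0, fun h => hlimv _ (hLtop h), fun h => hlimv _ (hLfin h), heven, he0,
    fun h => helim (by omega), ?_⟩
  obtain ⟨b, hb, hb0, heb⟩ := hexpos
  have hsubI : Set.Icc 0 b ⊆ I := hOC.out h0I hb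
  obtain ⟨z, hz, hz0⟩ := intermediate_value_Icc hb0.le (hecont.mono hsubI)
    (show (0:ℝ) ∈ Set.Icc (e 0) (e b) from ⟨by rw [he0]; norm_num, heb.le⟩)
  have hzpos : 0 < z := by
    rcases hz.1.eq_or_lt with h | h
    · rw [← h, he0] at hz0; norm_num at hz0
    · exact h
  refine ⟨z, hsubI hz, hzpos, hz0, fun t ht ht0 het => ?_⟩
  rcases lt_trichotomy t z with h | h | h
  · have := hemono t ht z (hsubI hz) ht0 h; linarith
  · exact h
  · have := hemono z (hsubI hz) t ht hzpos h; linarith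
end

section
/- Let n ≥ 2 be an integer and a > 0. Set T(a) = sinh^{n−1}(a)·∫_a^∞ (sinh^{2n−2}(u) − sinh^{2n−2}(a))^{−1/2} du. Then T(a) is finite, and the Cauchy problem sinh(f)·f'' = (n−1)·cosh(f)·(1 + f'²), f(0) = a, f'(0) = 0, has a maximal solution f(a,·) defined exactly on (−T(a), T(a)); this solution is a smooth even function of t satisfying: sinh^{n−1}(f(a,t))·(1 + f_t(a,t)²)^{−1/2} = sinh^{n−1}(a) for all t; f(a,t) ≥ a for all t; f_t(a,t) has the sign of t; f(a,t) → ∞ as t → T(a); and for t ∈ [0, T(a)), t = sinh^{n−1}(a)·∫_a^{f(a,t)} (sinh^{2n−2}(u) − sinh^{2n−2}(a))^{−1/2} du. -/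
open Real MeasureTheory Set Filter Topology

namespace Cat

/-- the profile as a function of `s`, where `f' = sinh s` -/
noncomputable def F (m : ℕ) (a s : ℝ) : ℝ :=
  Real.arsinh ((Real.sinh a ^ m * Real.cosh s) ^ ((m : ℝ)⁻¹))

/-- `dt/ds` -/
noncomputable def h (m : ℕ) (a s : ℝ) : ℝ :=
  Real.sinh (F m a s) / (m * Real.cosh s * Real.cosh (F m a s))

/-- `t` as a function of `s` -/
noncomputable def tau (m : ℕ) (a s : ℝ) : ℝ := ∫ x in (0:ℝ)..s, h m a x

variable {m : ℕ} {a : ℝ}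

lemma c_pos (ha : 0 < a) : 0 < Real.sinh a ^ m := pow_pos (Real.sinh_pos_iff.2 ha) _

lemma F_pos (ha : 0 < a) (s : ℝ) : 0 < F m a s := by
  unfold F
  rw [Real.arsinh_pos_iff]
  exact Real.rpow_pos_of_pos (mul_pos (c_pos ha) (Real.cosh_pos s)) _

lemma sinh_F_pos (ha : 0 < a) (s : ℝ) : 0 < Real.sinh (F m a s) :=
  Real.sinh_pos_iff.2 (F_pos ha s)

lemma F_spec (hm : 1 ≤ m) (ha : 0 < a) (s : ℝ) :
    Real.sinh (F m a s) ^ m = Real.sinh a ^ m * Real.cosh s := by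
  unfold F
  rw [Real.sinh_arsinh]
  exact Real.rpow_inv_natCast_pow (mul_pos (c_pos ha) (Real.cosh_pos s)).le (by omega)

lemma eq_F (hm : 1 ≤ m) (ha : 0 < a) {x s : ℝ} (hx : 0 < x)
    (hxs : Real.sinh x ^ m = Real.sinh a ^ m * Real.cosh s) : x = F m a s := by
  rw [← F_spec hm ha] at hxs
  apply Real.sinh_injective
  exact (pow_left_inj₀ (Real.sinh_pos_iff.2 hx).le (sinh_F_pos ha s).le (by omega)).1 hxs

lemma F_zero (hm : 1 ≤ m) (ha : 0 < a) : F m a 0 = a := by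
  symm; apply eq_F hm ha ha; simp

lemma F_neg (s : ℝ) : F m a (-s) = F m a s := by simp [F]

lemma h_neg (s : ℝ) : h m a (-s) = h m a s := by simp [h, F_neg]

lemma F_lt_iff (hm : 1 ≤ m) (ha : 0 < a) {s r : ℝ} : F m a s < F m a r ↔ |s| < |r| := by
  rw [← Real.cosh_lt_cosh, ← Real.sinh_lt_sinh,
    ← pow_lt_pow_iff_left₀ (sinh_F_pos ha s).le (sinh_F_pos ha r).le (n := m) (by omega),
    F_spec hm ha, F_spec hm ha]
  exact mul_lt_mul_iff_right₀ (c_pos ha)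

lemma F_surj (hm : 1 ≤ m) (ha : 0 < a) {u : ℝ} (hu : a ≤ u) : ∃ s, 0 ≤ s ∧ F m a s = u := by
  have h1 : 1 ≤ Real.sinh u ^ m / Real.sinh a ^ m := by
    rw [one_le_div (c_pos ha)]
    exact pow_le_pow_left₀ (Real.sinh_pos_iff.2 ha).le (Real.sinh_le_sinh.2 hu) _
  refine ⟨Real.arcosh (Real.sinh u ^ m / Real.sinh a ^ m), Real.arcosh_nonneg h1, ?_⟩
  symm
  apply eq_F hm ha (ha.trans_le hu)
  rw [Real.cosh_arcosh h1]
  have := (c_pos (m := m) ha).ne'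
  field_simp

lemma image_Ioi (hm : 1 ≤ m) (ha : 0 < a) : F m a '' Ioi 0 = Ioi a := by
  ext u
  simp only [mem_image, mem_Ioi]
  constructor
  · rintro ⟨s, hs, rfl⟩
    nth_rw 1 [← F_zero hm ha]
    rw [F_lt_iff hm ha]; simpa using hs.ne'
  · intro hu
    obtain ⟨s, hs, rfl⟩ := F_surj hm ha hu.le
    refine ⟨s, lt_of_le_of_ne hs ?_, rfl⟩
    rintro rfl
    rw [F_zero hm ha] at hu
    exact lt_irrefl _ hu

lemma image_Ioo (hm : 1 ≤ m) (ha : 0 < a) {r : ℝ} (hr : 0 ≤ r) :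
    F m a '' Ioo 0 r = Ioo a (F m a r) := by
  ext u
  simp only [mem_image, mem_Ioo]
  constructor
  · rintro ⟨s, ⟨hs, hsr⟩, rfl⟩
    constructor
    · nth_rw 1 [← F_zero hm ha]
      rw [F_lt_iff hm ha]; simpa using hs.ne'
    · rw [F_lt_iff hm ha, abs_of_pos hs, abs_of_nonneg hr]; exact hsr
  · rintro ⟨hu, hur⟩
    obtain ⟨s, hs, rfl⟩ := F_surj hm ha hu.le
    refine ⟨s, ⟨lt_of_le_of_ne hs ?_, ?_⟩, rfl⟩
    · rintro rfl
      rw [F_zero hm ha] at hu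
      exact lt_irrefl _ hu
    · rwa [F_lt_iff hm ha, abs_of_nonneg hs, abs_of_nonneg hr] at hur

lemma F_injOn (hm : 1 ≤ m) (ha : 0 < a) : InjOn (F m a) (Ioi 0) := by
  have : StrictMonoOn (F m a) (Ioi 0) := by
    intro s hs r hr hsr
    rw [F_lt_iff hm ha, abs_of_pos hs, abs_of_pos hr]; exact hsr
  exact this.injOn

lemma F_contDiff (ha : 0 < a) : ContDiff ℝ (⊤ : ℕ∞) (F m a) := by
  unfold F
  apply ContDiff.arsinh
  apply ContDiff.rpow_const_of_ne
  · exact contDiff_const.mul Real.contDiff_cosh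
  · intro s; exact (mul_pos (c_pos ha) (Real.cosh_pos s)).ne'

lemma h_pos (hm : 1 ≤ m) (ha : 0 < a) (s : ℝ) : 0 < h m a s := by
  unfold h
  have := sinh_F_pos (m := m) ha s
  have := Real.cosh_pos s
  have := Real.cosh_pos (F m a s)
  have : (0:ℝ) < m := by exact_mod_cast hm
  positivity

lemma h_contDiff (hm : 1 ≤ m) (ha : 0 < a) : ContDiff ℝ (⊤ : ℕ∞) (h m a) := by
  unfold h
  have hF := F_contDiff (m := m) ha
  apply ContDiff.div
  · exact hF.sinh
  · exact (contDiff_const.mul Real.contDiff_cosh).mul hF.cosh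
  · intro s
    have := Real.cosh_pos s
    have := Real.cosh_pos (F m a s)
    have : (0:ℝ) < m := by exact_mod_cast hm
    positivity

lemma F_hasDerivAt (hm : 1 ≤ m) (ha : 0 < a) (s : ℝ) :
    HasDerivAt (F m a) (Real.sinh s * h m a s) s := by
  have hd : HasDerivAt (F m a) (deriv (F m a) s) s :=
    ((F_contDiff ha).differentiable (by simp) s).hasDerivAt
  have h1 := (hd.sinh).pow m
  have h2 : HasDerivAt (fun s => Real.sinh (F m a s) ^ m) (Real.sinh a ^ m * Real.sinh s) s := by
    simp_rw [F_spec hm ha]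
    exact (Real.hasDerivAt_cosh s).const_mul _
  have h3 := h1.unique h2
  convert hd using 1
  have e := F_spec hm ha s
  have p1 := sinh_F_pos (m := m) ha s
  have p2 := Real.cosh_pos s
  have p3 := Real.cosh_pos (F m a s)
  have p4 : (0:ℝ) < m := by exact_mod_cast hm
  unfold h
  obtain ⟨k, rfl⟩ : ∃ k, m = k + 1 := ⟨m - 1, by omega⟩
  simp only [Nat.add_sub_cancel] at h3
  have p5 : 0 < Real.sinh (F (k+1) a s) ^ k := pow_pos p1 _
  rw [mul_div_assoc', div_eq_iff (by positivity)]
  apply mul_left_cancel₀ p5.ne'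
  rw [pow_succ] at e
  linear_combination Real.sinh s * e - Real.cosh s * h3

lemma tau_hasDerivAt (hm : 1 ≤ m) (ha : 0 < a) (s : ℝ) :
    HasDerivAt (tau m a) (h m a s) s :=
  ((h_contDiff hm ha).continuous).integral_hasStrictDerivAt 0 s |>.hasDerivAt

lemma tau_deriv (hm : 1 ≤ m) (ha : 0 < a) : deriv (tau m a) = h m a :=
  funext fun s => (tau_hasDerivAt hm ha s).deriv

lemma tau_contDiff (hm : 1 ≤ m) (ha : 0 < a) : ContDiff ℝ (⊤ : ℕ∞) (tau m a) := by
  rw [contDiff_infty_iff_deriv, tau_deriv hm ha]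
  exact ⟨fun s => (tau_hasDerivAt hm ha s).differentiableAt, h_contDiff hm ha⟩

lemma tau_strictMono (hm : 1 ≤ m) (ha : 0 < a) : StrictMono (tau m a) := by
  apply strictMono_of_deriv_pos
  rw [tau_deriv hm ha]
  exact h_pos hm ha

lemma tau_zero : tau m a 0 = 0 := by simp [tau]

lemma tau_neg (s : ℝ) : tau m a (-s) = - tau m a s := by
  unfold tau
  have := intervalIntegral.integral_comp_neg (a := 0) (b := s) (h m a)
  simp only [h_neg, neg_zero] at this
  rw [this, intervalIntegral.integral_symm]

lemma h_integrableOn (hm : 1 ≤ m) (ha : 0 < a) : IntegrableOn (h m a) (Ioi 0) := by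
  refine Integrable.mono' ((integrableOn_exp_neg_Ioi 0).const_mul 2)
    (h_contDiff hm ha).continuous.aestronglyMeasurable (ae_of_all _ fun s => ?_)
  rw [Real.norm_of_nonneg (h_pos hm ha s).le]
  unfold h
  have p1 := sinh_F_pos (m := m) ha s
  have p2 := Real.cosh_pos s
  have p3 := Real.cosh_pos (F m a s)
  have p4 : (1:ℝ) ≤ m := by exact_mod_cast hm
  have p5 := Real.sinh_lt_cosh (F m a s)
  have p6 : 1 ≤ 2 * rexp (-s) * Real.cosh s := by
    rw [Real.cosh_eq]
    have : rexp (-s) * rexp s = 1 := by rw [← Real.exp_add]; simp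
    nlinarith [sq_nonneg (rexp (-s))]
  rw [div_le_iff₀ (by positivity)]
  have p7 : 1 ≤ 2 * rexp (-s) * Real.cosh s * m := one_le_mul_of_one_le_of_one_le p6 p4
  nlinarith

lemma tau_tendsto (hm : 1 ≤ m) (ha : 0 < a) :
    Tendsto (tau m a) atTop (𝓝 (∫ x in Ioi 0, h m a x)) :=
  intervalIntegral_tendsto_integral_Ioi 0 (h_integrableOn hm ha) tendsto_id

lemma tau_range (hm : 1 ≤ m) (ha : 0 < a) {T : ℝ} (hT : T = ∫ x in Ioi 0, h m a x) :
    range (tau m a) = Ioo (-T) T := by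
  have hmono := tau_strictMono (m := m) hm ha
  have hlt : ∀ s, tau m a s < T := fun s => by
    rw [hT]
    exact (hmono (lt_add_one s)).trans_le (hmono.monotone.ge_of_tendsto (tau_tendsto hm ha) _)
  ext t
  constructor
  · rintro ⟨s, rfl⟩
    refine ⟨?_, hlt s⟩
    have := hlt (-s)
    rw [tau_neg] at this
    linarith
  · rintro ⟨h1, h2⟩
    have ev : ∀ t < T, ∃ s, t < tau m a s := fun t ht => by
      rw [hT] at ht
      exact ((tau_tendsto hm ha).eventually (lt_mem_nhds ht)).exists
    obtain ⟨r, hr⟩ := ev t h2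
    obtain ⟨l, hl⟩ := ev (-t) (by linarith)
    exact mem_range_of_exists_le_of_exists_ge (tau_contDiff hm ha).continuous
      ⟨-l, by rw [tau_neg]; linarith⟩ ⟨r, hr.le⟩

/-- the integrand -/
noncomputable def G (m : ℕ) (a u : ℝ) : ℝ :=
  (Real.sinh u ^ (2*m) - Real.sinh a ^ (2*m)) ^ (-(1:ℝ)/2)

lemma G_F (hm : 1 ≤ m) (ha : 0 < a) {s : ℝ} (hs : 0 < s) :
    |Real.sinh s * h m a s| • G m a (F m a s) = (Real.sinh a ^ m)⁻¹ * h m a s := by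
  have p1 := Real.sinh_pos_iff.2 hs
  have p2 := h_pos hm ha s
  have p3 := c_pos (m := m) ha
  have e : Real.sinh (F m a s) ^ (2*m) - Real.sinh a ^ (2*m)
      = (Real.sinh a ^ m * Real.sinh s) ^ 2 := by
    rw [mul_comm 2 m, pow_mul, pow_mul, F_spec hm ha, mul_pow, mul_pow, Real.cosh_sq]; ring
  unfold G
  rw [e, abs_of_pos (by positivity), smul_eq_mul, ← Real.rpow_natCast, ← Real.rpow_mul (by positivity)]
  norm_num
  rw [Real.rpow_neg_one]
  field_simp

lemma G_integrableOn (hm : 1 ≤ m) (ha : 0 < a) : IntegrableOn (G m a) (Ioi a) := by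
  rw [← image_Ioi hm ha, integrableOn_image_iff_integrableOn_abs_deriv_smul measurableSet_Ioi
    (fun x _ => (F_hasDerivAt hm ha x).hasDerivWithinAt) (F_injOn hm ha)]
  exact IntegrableOn.congr_fun ((h_integrableOn hm ha).const_mul _)
    (fun x hx => (G_F hm ha hx).symm) measurableSet_Ioi

lemma G_integral_image (hm : 1 ≤ m) (ha : 0 < a) {S : Set ℝ} (hS : MeasurableSet S)
    (hS0 : S ⊆ Ioi 0) :
    Real.sinh a ^ m * ∫ u in F m a '' S, G m a u = ∫ x in S, h m a x := by
  rw [integral_image_eq_integral_abs_deriv_smul hS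
    (fun x _ => (F_hasDerivAt hm ha x).hasDerivWithinAt) ((F_injOn hm ha).mono hS0),
    setIntegral_congr_fun hS (fun x hx => G_F hm ha (hS0 hx)), integral_const_mul,
    mul_inv_cancel_left₀ (c_pos ha).ne']

lemma G_integral_Ioi (hm : 1 ≤ m) (ha : 0 < a) :
    Real.sinh a ^ m * ∫ u in Ioi a, G m a u = ∫ x in Ioi 0, h m a x := by
  rw [← image_Ioi hm ha]
  exact G_integral_image hm ha measurableSet_Ioi subset_rfl

lemma G_integral_interval (hm : 1 ≤ m) (ha : 0 < a) {s : ℝ} (hs : 0 ≤ s) :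
    Real.sinh a ^ m * ∫ u in a..(F m a s), G m a u = tau m a s := by
  have hle : a ≤ F m a s := by
    rcases hs.eq_or_lt with rfl | hs'
    · rw [F_zero hm ha]
    · have : F m a s ∈ Ioi a := by rw [← image_Ioi hm ha]; exact ⟨s, hs', rfl⟩
      exact le_of_lt this
  rw [tau, intervalIntegral.integral_of_le hle, intervalIntegral.integral_of_le hs,
    integral_Ioc_eq_integral_Ioo, integral_Ioc_eq_integral_Ioo, ← image_Ioo hm ha hs]
  exact G_integral_image hm ha measurableSet_Ioo (fun x hx => hx.1)

lemma maximal (hm : 1 ≤ m) (ha : 0 < a) (J : Set ℝ) (hJ : IsOpen J) (hJc : J.OrdConnected)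
    (h0 : (0:ℝ) ∈ J) (g : ℝ → ℝ) (hg : ∀ t ∈ J, DifferentiableAt ℝ g t)
    (hg' : ∀ t ∈ J, DifferentiableAt ℝ (deriv g) t) (g0 : g 0 = a) (g0' : deriv g 0 = 0)
    (ode : ∀ t ∈ J, Real.sinh (g t) * deriv (deriv g) t
            = (m : ℝ) * Real.cosh (g t) * (1 + (deriv g t) ^ 2)) :
    J ⊆ range (tau m a) := by
  have p4 : (0:ℝ) < m := by exact_mod_cast hm
  have hpre : IsPreconnected J := hJc.isPreconnected
  have hne : ∀ t ∈ J, g t ≠ 0 := by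
    intro t ht h
    have e := ode t ht
    rw [h] at e
    simp only [Real.sinh_zero, Real.cosh_zero, zero_mul] at e
    have : 0 < (m:ℝ) * 1 * (1 + deriv g t ^ 2) := by positivity
    linarith
  have hpos : ∀ t ∈ J, 0 < g t := by
    intro t ht
    by_contra hcon
    have hc : ContinuousOn g J := fun x hx => (hg x hx).continuousAt.continuousWithinAt
    obtain ⟨x, hx, hx0⟩ := hpre.intermediate_value ht h0 hc
      (show (0:ℝ) ∈ Icc (g t) (g 0) from ⟨not_lt.1 hcon, by rw [g0]; exact ha.le⟩)
    exact hne x hx hx0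
  have hQ : ∀ t ∈ J, HasDerivAt (fun t => (Real.sinh (g t) ^ m)^2 / (1 + deriv g t ^ 2)) 0 t := by
    intro t ht
    have d1 := (((hg t ht).hasDerivAt.sinh).pow m).pow 2
    have d2 := ((hg' t ht).hasDerivAt.pow 2).const_add 1
    have d3 := d1.div d2 (by simp only [Pi.pow_apply]; positivity)
    refine HasDerivAt.congr_deriv d3 ?_
    rw [div_eq_zero_iff]
    left
    obtain ⟨k, rfl⟩ : ∃ k, m = k + 1 := ⟨m - 1, by omega⟩
    have e := ode t ht
    simp only [Pi.pow_apply, Pi.mul_apply, Nat.add_sub_cancel, pow_succ, pow_zero, Nat.reduceSub] at *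
    push_cast at *
    linear_combination (-2 * (Real.sinh (g t) ^ k)^2 * Real.sinh (g t) * deriv g t) * e
  have hfirst : ∀ t ∈ J, Real.sinh (g t) ^ m = Real.sinh a ^ m * Real.cosh (Real.arsinh (deriv g t)) := by
    intro t ht
    have e := hJ.is_const_of_deriv_eq_zero hpre
      (fun x hx => (hQ x hx).differentiableAt.differentiableWithinAt)
      (fun x hx => (hQ x hx).deriv) ht h0
    simp only [g0, g0'] at e
    rw [div_eq_iff (by positivity)] at e
    have p := c_pos (m := m) (hpos t ht)
    rw [Real.cosh_arsinh, ← Real.sqrt_sq p.le, e]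
    rw [Real.sqrt_mul (by positivity)]
    simp [Real.sqrt_sq (c_pos ha).le]
  have hgF : ∀ t ∈ J, g t = F m a (Real.arsinh (deriv g t)) := fun t ht =>
    eq_F hm ha (hpos t ht) (hfirst t ht)
  have hR : ∀ t ∈ J, HasDerivAt (fun t => tau m a (Real.arsinh (deriv g t)) - t) 0 t := by
    intro t ht
    have d1 := ((tau_hasDerivAt hm ha _).comp t (hg' t ht).hasDerivAt.arsinh).sub (hasDerivAt_id t)
    refine HasDerivAt.congr_deriv d1 ?_
    rw [sub_eq_zero, h, ← hgF t ht, Real.cosh_arsinh]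
    have q : 0 < √(1 + deriv g t ^ 2) := by positivity
    have q1 := Real.cosh_pos (g t)
    have q2 : √(1 + deriv g t ^ 2) ^ 2 = 1 + deriv g t ^ 2 := Real.sq_sqrt (by positivity)
    have e := ode t ht
    rw [← q2] at e
    simp only [smul_eq_mul]
    field_simp
    linear_combination e
  intro t ht
  have e := hJ.is_const_of_deriv_eq_zero hpre
      (fun x hx => (hR x hx).differentiableAt.differentiableWithinAt)
      (fun x hx => (hR x hx).deriv) ht h0
  simp only [g0', Real.arsinh_zero, tau_zero, sub_zero] at e
  exact ⟨_, sub_eq_zero.1 e⟩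

lemma exists_sigma (hm : 1 ≤ m) (ha : 0 < a) {T : ℝ} (hT : T = ∫ x in Ioi 0, h m a x) :
    ∃ σ : ℝ → ℝ, (∀ s, σ (tau m a s) = s) ∧ (∀ t ∈ Ioo (-T) T, tau m a (σ t) = t) ∧
      (∀ t ∈ Ioo (-T) T, HasDerivAt σ (h m a (σ t))⁻¹ t) ∧ ContDiffOn ℝ (⊤ : ℕ∞) σ (Ioo (-T) T) := by
  have hr := tau_range hm ha hT
  have hemb : IsOpenEmbedding (tau m a) :=
    ⟨(tau_strictMono hm ha).isEmbedding_of_ordConnected (by rw [hr]; exact ordConnected_Ioo),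
      by rw [hr]; exact isOpen_Ioo⟩
  let e := hemb.toOpenPartialHomeomorph (tau m a)
  have ht : e.target = Ioo (-T) T := by simp [e, hr]
  have he : ∀ s, e s = tau m a s := fun s => rfl
  refine ⟨e.symm, fun s => e.left_inv (x := s) (by simp [e]), fun t h => e.right_inv (by rwa [ht]),
    fun t h => e.hasDerivAt_symm (by rwa [ht]) (h_pos hm ha _).ne' (tau_hasDerivAt hm ha _),
    fun t h => (e.contDiffAt_symm_deriv (h_pos hm ha _).ne' (by rwa [ht]) (tau_hasDerivAt hm ha _)
      (tau_contDiff hm ha).contDiffAt).contDiffWithinAt⟩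

end Cat

/-- The profile of the minimal catenoid in `ℍⁿ × ℝ`: the Cauchy problem
`sinh(f)f'' = (n−1)cosh(f)(1+f'²)`, `f(0) = a`, `f'(0) = 0` has a maximal solution defined
exactly on `(−T(a), T(a))` with `T(a) = sinh^{n−1}(a)·∫_a^∞ (sinh^{2n−2}u − sinh^{2n−2}a)^{−1/2} du`
finite, the solution being smooth, even, `≥ a`, with first integral
`sinh^{n−1}(f)(1+f'²)^{−1/2} = sinh^{n−1}(a)`, `f' ` of the sign of `t`, blowing up at `T(a)`. -/
theorem stmt12 (n : ℕ) (hn : 2 ≤ n) (a : ℝ) (ha : 0 < a)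
    (T : ℝ)
    (hT : T = Real.sinh a ^ (n-1) *
      ∫ u in Set.Ioi a, (Real.sinh u ^ (2*n-2) - Real.sinh a ^ (2*n-2)) ^ (-(1:ℝ)/2)) :
    MeasureTheory.IntegrableOn
      (fun u => (Real.sinh u ^ (2*n-2) - Real.sinh a ^ (2*n-2)) ^ (-(1:ℝ)/2)) (Set.Ioi a) ∧
    ∃ f : ℝ → ℝ,
      ContDiffOn ℝ (⊤ : ℕ∞) f (Set.Ioo (-T) T) ∧
      (∀ t ∈ Set.Ioo (-T) T, f (-t) = f t) ∧
      f 0 = a ∧ deriv f 0 = 0 ∧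
      (∀ t ∈ Set.Ioo (-T) T,
        Real.sinh (f t) * deriv (deriv f) t
          = (n - 1 : ℝ) * Real.cosh (f t) * (1 + (deriv f t) ^ 2)) ∧
      (∀ t ∈ Set.Ioo (-T) T,
        Real.sinh (f t) ^ (n-1) / Real.sqrt (1 + (deriv f t) ^ 2) = Real.sinh a ^ (n-1)) ∧
      (∀ t ∈ Set.Ioo (-T) T, a ≤ f t) ∧
      (∀ t ∈ Set.Ioo (-T) T, Real.sign (deriv f t) = Real.sign t) ∧
      Filter.Tendsto f (𝓝[<] T) Filter.atTop ∧
      (∀ t ∈ Set.Ico 0 T,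
        t = Real.sinh a ^ (n-1) *
          ∫ u in a..(f t), (Real.sinh u ^ (2*n-2) - Real.sinh a ^ (2*n-2)) ^ (-(1:ℝ)/2)) ∧
      (∀ J : Set ℝ, IsOpen J → J.OrdConnected → (0:ℝ) ∈ J →
        ∀ g : ℝ → ℝ,
          (∀ t ∈ J, DifferentiableAt ℝ g t) →
          (∀ t ∈ J, DifferentiableAt ℝ (deriv g) t) →
          g 0 = a → deriv g 0 = 0 →
          (∀ t ∈ J, Real.sinh (g t) * deriv (deriv g) t
            = (n - 1 : ℝ) * Real.cosh (g t) * (1 + (deriv g t) ^ 2)) →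
          J ⊆ Set.Ioo (-T) T) := by
  obtain ⟨m, rfl⟩ : ∃ m, n = m + 1 := ⟨n - 1, by omega⟩
  have hm : 1 ≤ m := by omega
  have e2 : 2 * (m + 1) - 2 = 2 * m := by omega
  simp only [e2, Nat.add_sub_cancel, Nat.cast_add, Nat.cast_one, add_sub_cancel_right] at hT ⊢
  have hT' : T = ∫ x in Ioi 0, Cat.h m a x := hT.trans (Cat.G_integral_Ioi hm ha)
  have hr := Cat.tau_range hm ha hT'
  obtain ⟨σ, hl, hri, hd, hs⟩ := Cat.exists_sigma hm ha hT'
  have hmono := Cat.tau_strictMono (m := m) hm ha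
  have h0 : (0:ℝ) ∈ Ioo (-T) T := by rw [← hr]; exact ⟨0, Cat.tau_zero⟩
  have hσ0 : σ 0 = 0 := by have := hl 0; rwa [Cat.tau_zero] at this
  have hf : ∀ t ∈ Ioo (-T) T, HasDerivAt (fun t => Cat.F m a (σ t)) (Real.sinh (σ t)) t := by
    intro t ht
    have := (Cat.F_hasDerivAt hm ha (σ t)).comp t (hd t ht)
    rwa [mul_inv_cancel_right₀ (Cat.h_pos hm ha _).ne'] at this
  have hf' : ∀ t ∈ Ioo (-T) T, deriv (fun t => Cat.F m a (σ t)) t = Real.sinh (σ t) :=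
    fun t ht => (hf t ht).deriv
  have hf'' : ∀ t ∈ Ioo (-T) T, deriv (deriv (fun t => Cat.F m a (σ t))) t
      = Real.cosh (σ t) * (Cat.h m a (σ t))⁻¹ := by
    intro t ht
    have ev : deriv (fun t => Cat.F m a (σ t)) =ᶠ[𝓝 t] fun t => Real.sinh (σ t) := by
      filter_upwards [isOpen_Ioo.mem_nhds ht] with x hx using hf' x hx
    rw [ev.deriv_eq]
    exact (hd t ht).sinh.deriv
  have hge : ∀ s, a ≤ Cat.F m a s := fun s => by
    rw [← not_lt]
    nth_rw 2 [← Cat.F_zero hm ha]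
    rw [Cat.F_lt_iff hm ha]
    simp
  refine ⟨Cat.G_integrableOn hm ha, fun t => Cat.F m a (σ t), (Cat.F_contDiff ha).comp_contDiffOn hs,
    ?_, ?_, ?_, ?_, ?_, fun t _ => hge _, ?_, ?_, ?_, ?_⟩
  · intro t ht
    have : σ (-t) = - σ t := by
      have := hl (- σ t)
      rwa [Cat.tau_neg, hri t ht] at this
    simp only [this, Cat.F_neg]
  · simp only [hσ0, Cat.F_zero hm ha]
  · rw [hf' 0 h0, hσ0, Real.sinh_zero]
  · intro t ht
    rw [hf'' t ht, hf' t ht, Cat.h]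
    have p1 := Cat.sinh_F_pos (m := m) ha (σ t)
    have p4 : (0:ℝ) < m := by exact_mod_cast hm
    rw [inv_div, add_comm, ← Real.cosh_sq]
    field_simp
  · intro t ht
    have p := Real.cosh_pos (σ t)
    rw [hf' t ht, add_comm, ← Real.cosh_sq, Real.sqrt_sq p.le, Cat.F_spec hm ha]
    field_simp
  · intro t ht
    rw [hf' t ht]
    have e : Cat.tau m a (σ t) = t := hri t ht
    rcases lt_trichotomy (σ t) 0 with h | h | h
    · have h2 := hmono h
      rw [Cat.tau_zero, e] at h2
      rw [Real.sign_of_neg h2, Real.sign_of_neg (Real.sinh_neg_iff.2 h)]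
    · have : t = 0 := by rw [← e, h, Cat.tau_zero]
      rw [h, this, Real.sinh_zero]
    · have h2 := hmono h
      rw [Cat.tau_zero, e] at h2
      rw [Real.sign_of_pos h2, Real.sign_of_pos (Real.sinh_pos_iff.2 h)]
  · rw [tendsto_atTop]
    intro B
    obtain ⟨s, hs0, hsB⟩ := Cat.F_surj (m := m) hm ha (le_max_left a B)
    have hsT : Cat.tau m a s ∈ Ioo (-T) T := by rw [← hr]; exact ⟨s, rfl⟩
    filter_upwards [Ioo_mem_nhdsLT hsT.2] with t ht
    have hlt : s < σ t := by
      rw [← hmono.lt_iff_lt, hri t ⟨hsT.1.trans ht.1, ht.2⟩]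
      exact ht.1
    have : Cat.F m a s < Cat.F m a (σ t) := by
      rw [Cat.F_lt_iff hm ha, abs_of_nonneg hs0]
      exact hlt.trans_le (le_abs_self _)
    rw [hsB] at this
    exact (le_max_right a B).trans this.le
  · intro t ht
    have ht' : t ∈ Ioo (-T) T := ⟨h0.1.trans_le ht.1, ht.2⟩
    have hσ : 0 ≤ σ t := by
      rw [← hmono.le_iff_le, hri t ht', Cat.tau_zero]
      exact ht.1
    exact ((Cat.G_integral_interval hm ha hσ).trans (hri t ht')).symm
  · intro J hJ hJc hJ0 g hg hg' g0 g0' ode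
    rw [← hr]
    exact Cat.maximal hm ha J hJ hJc hJ0 g hg hg' g0 g0' ode
end

section
/- Let n ≥ 2, a > 0, T(a) = sinh^{n−1}(a)·∫_a^∞(sinh^{2n−2}(u) − sinh^{2n−2}(a))^{−1/2}du, and let f = f(a,·) : (−T(a), T(a)) → ℝ be the maximal even solution of sinh(f)f'' = (n−1)cosh(f)(1+f'²), f(0) = a, f'(0) = 0. For t ≥ 0, define v(a,t) = (1 − (sinh(a)/sinh(f(a,t)))^{2n−2})^{1/2}, e₀(a,t) = (cosh(a)/cosh(f(a,t)))·(sinh(a)/sinh(f(a,t)))^{n−2}, e₁(a,t) = cosh(a)·∫₁^{sinh(f(a,t))/sinh(a)} (u^{2n−2} − 1)^{−1/2}·(sinh²(a)·u² + 1)^{−3/2} du, e(a,t) = −e₀(a,t) + v(a,t)·e₁(a,t), and E(a) = cosh(a)·∫₁^∞ (u^{2n−2} − 1)^{−1/2}·(sinh²(a)·u² + 1)^{−3/2} du. Then: (1) E(a) is finite and positive; (2) v(a,·) vanishes only at t = 0 and v(a,t) → 1 as t → T(a); (3) e(a,·) satisfies e(a,0) = −1 and has exactly one zero z(a) in (0,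 T(a)); (4) the function y(a,t) = e(a,t) + E(a)·v(a,t) has exactly one zero ℓ(a) in (0, T(a)), and ℓ(a) ∈ (0, z(a)). -/
open Real MeasureTheory Set Filter Topology

/-- Integrability criterion on a half line. -/
lemma aux_int (g : ℝ → ℝ) (a C : ℝ) (hc : ContinuousOn g (Ioi a))
    (h0 : ∀ u ∈ Ioi a, 0 ≤ g u)
    (h1 : ∀ u ∈ Ioc a (a+1), g u ≤ C * (u - a) ^ (-(1:ℝ)/2))
    (h2 : ∀ u ∈ Ioi (a+1), g u ≤ C * (u - a) ^ (-(2:ℝ))) :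
    IntegrableOn g (Ioi a) := by
  have hm : AEStronglyMeasurable g (volume.restrict (Ioi a)) :=
    hc.aestronglyMeasurable measurableSet_Ioi
  have hun : Ioi a = Ioc a (a+1) ∪ Ioi (a+1) := by
    rw [Ioc_union_Ioi_eq_Ioi]; linarith
  rw [hun]
  refine IntegrableOn.union ?_ ?_
  · have : IntervalIntegrable (fun u : ℝ => (u - a) ^ (-(1:ℝ)/2)) volume a (a+1) := by
      have := (intervalIntegral.intervalIntegrable_rpow' (a := 0) (b := 1) (r := -(1:ℝ)/2) (by norm_num)).comp_sub_right a
      simpa [add_comm] using this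
    have := ((intervalIntegrable_iff_integrableOn_Ioc_of_le (by linarith)).1 this).const_mul C
    refine Integrable.mono' this (hm.mono_measure (Measure.restrict_mono Ioc_subset_Ioi_self le_rfl)) ?_
    refine (ae_restrict_iff' measurableSet_Ioc).2 (Eventually.of_forall fun u hu => ?_)
    rw [Real.norm_of_nonneg (h0 u hu.1)]
    exact h1 u hu
  · have h := (integrableOn_Ioi_rpow_of_lt (a := -(2:ℝ)) (c := 1) (by norm_num) (by norm_num))
    have : IntegrableOn (fun u : ℝ => (u - a) ^ (-(2:ℝ))) (Ioi (a+1)) := by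
      have h3 := (measurePreserving_sub_right volume a).integrableOn_comp_preimage
        (measurableEmbedding_subRight a) (f := fun u : ℝ => u ^ (-(2:ℝ))) (s := Ioi 1)
      have h4 := h3.2 h
      simpa [Function.comp_def, add_comm] using h4
    have := this.const_mul C
    refine Integrable.mono' this (hm.mono_measure (Measure.restrict_mono (Ioi_subset_Ioi (by linarith)) le_rfl)) ?_
    refine (ae_restrict_iff' measurableSet_Ioi).2 (Eventually.of_forall fun u hu => ?_)
    have hu' : a + 1 < u := hu
    rw [Real.norm_of_nonneg (h0 u (by simp; linarith))]
    exact h2 u hu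

lemma aux_pow (m : ℕ) (hm : 2 ≤ m) (x y : ℝ) (hy : 0 < y) (hxy : y ≤ x) :
    y ^ (m-2) * (x^2 - y^2) ≤ x ^ m - y ^ m := by
  obtain ⟨k, rfl⟩ := Nat.exists_eq_add_of_le hm
  have : y ^ k ≤ x ^ k := pow_le_pow_left₀ hy.le hxy k
  simp only [Nat.add_sub_cancel_left, pow_add]
  nlinarith [mul_le_mul_of_nonneg_left this (sq_nonneg x)]

lemma aux_h (m : ℕ) (hm : 2 ≤ m) (a : ℝ) (ha : 0 < a) :
    IntegrableOn (fun u => (Real.sinh u ^ m - Real.sinh a ^ m) ^ (-(1:ℝ)/2)) (Ioi a) ∧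
    ContinuousOn (fun u => (Real.sinh u ^ m - Real.sinh a ^ m) ^ (-(1:ℝ)/2)) (Ioi a) ∧
    ∀ u ∈ Ioi a, 0 < (Real.sinh u ^ m - Real.sinh a ^ m) ^ (-(1:ℝ)/2) := by
  have hs : 0 < Real.sinh a := Real.sinh_pos_iff.2 ha
  have hb : ∀ u ∈ Ioi a, 0 < Real.sinh u ^ m - Real.sinh a ^ m := fun u hu =>
    sub_pos.2 (pow_lt_pow_left₀ (Real.sinh_lt_sinh.2 hu) hs.le (by omega))
  have hcont : ContinuousOn (fun u => (Real.sinh u ^ m - Real.sinh a ^ m) ^ (-(1:ℝ)/2)) (Ioi a) := by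
    refine ContinuousOn.rpow_const ?_ (fun u hu => Or.inl (hb u hu).ne')
    exact ((Real.continuous_sinh.pow m).sub continuous_const).continuousOn
  refine ⟨?_, hcont, fun u hu => Real.rpow_pos_of_pos (hb u hu) _⟩
  have hd : ∀ u, Real.sinh u ^ 2 - Real.sinh a ^ 2 = Real.sinh (u - a) * Real.sinh (u + a) := by
    intro u
    rw [Real.sinh_sub, Real.sinh_add]
    nlinarith [Real.cosh_sq u, Real.cosh_sq a]
  set c := Real.sinh a ^ (m-2) with hcdef
  have hcp : 0 < c := pow_pos hs _
  have hexp : (-(1:ℝ)/2) ≤ 0 := by norm_num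
  refine aux_int _ a ((c * Real.sinh a) ^ (-(1:ℝ)/2) + 4 * c ^ (-(1:ℝ)/2)) hcont
    (fun u hu => (Real.rpow_pos_of_pos (hb u hu) _).le) ?_ ?_
  · intro u hu
    have hr : 0 < u - a := sub_pos.2 hu.1
    have h1 : (c * Real.sinh a) * (u - a) ≤ Real.sinh u ^ m - Real.sinh a ^ m := by
      refine le_trans ?_ (aux_pow m hm _ _ hs (Real.sinh_le_sinh.2 hu.1.le))
      rw [hd, mul_assoc]
      have e1 : u - a ≤ Real.sinh (u - a) := Real.self_le_sinh_iff.2 hr.le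
      have e2 : Real.sinh a ≤ Real.sinh (u + a) := Real.sinh_le_sinh.2 (by linarith)
      refine mul_le_mul_of_nonneg_left ?_ hcp.le
      nlinarith
    have h2 := Real.rpow_le_rpow_of_nonpos (by positivity) h1 hexp
    rw [Real.mul_rpow (by positivity) hr.le] at h2
    refine h2.trans (mul_le_mul_of_nonneg_right ?_ (by positivity))
    have : 0 ≤ 4 * c ^ (-(1:ℝ)/2) := by positivity
    linarith
  · intro u hu
    have hu' : a + 1 < u := hu
    have hr : 0 < u - a := by linarith
    have h1 : c * ((u - a)^2/4)^2 ≤ Real.sinh u ^ m - Real.sinh a ^ m := by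
      refine le_trans ?_ (aux_pow m hm _ _ hs (Real.sinh_le_sinh.2 (by linarith)))
      rw [hd]
      have e1 : (u - a)^2/4 ≤ Real.sinh (u - a) := by
        rw [Real.sinh_eq]
        have := Real.quadratic_le_exp_of_nonneg hr.le
        have h' : Real.exp (-(u-a)) ≤ 1 := Real.exp_le_one_iff.2 (by linarith)
        linarith
      have e2 : Real.sinh (u - a) ≤ Real.sinh (u + a) := Real.sinh_le_sinh.2 (by linarith)
      refine mul_le_mul_of_nonneg_left ?_ hcp.le
      have : 0 ≤ (u-a)^2/4 := by positivity
      nlinarith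
    have h2 := Real.rpow_le_rpow_of_nonpos (by positivity) h1 hexp
    rw [Real.mul_rpow (by positivity) (by positivity)] at h2
    have h3 : (((u - a)^2/4)^2 : ℝ) ^ (-(1:ℝ)/2) = 4 * (u - a) ^ (-(2:ℝ)) := by
      rw [← Real.rpow_natCast, ← Real.rpow_mul (by positivity)]
      norm_num
      rw [Real.rpow_neg_one]
      field_simp
    rw [h3] at h2
    refine h2.trans ?_
    have h5 : 0 ≤ (c * Real.sinh a) ^ (-(1:ℝ)/2) := by positivity
    have h6 : 0 ≤ (u - a) ^ (-(2:ℝ)) := by positivity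
    nlinarith

lemma aux_k (m : ℕ) (hm : 2 ≤ m) (s : ℝ) (hs : 0 < s) :
    IntegrableOn (fun u : ℝ => (u ^ m - 1) ^ (-(1:ℝ)/2) * (s ^ 2 * u ^ 2 + 1) ^ (-(3:ℝ)/2)) (Ioi 1) ∧
    ∀ u ∈ Ioi (1:ℝ), 0 < (u ^ m - 1) ^ (-(1:ℝ)/2) * (s ^ 2 * u ^ 2 + 1) ^ (-(3:ℝ)/2) := by
  have hb : ∀ u ∈ Ioi (1:ℝ), 0 < u ^ m - 1 := fun u hu =>
    sub_pos.2 (one_lt_pow₀ hu (by omega))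
  have hq : ∀ u : ℝ, 0 < s ^ 2 * u ^ 2 + 1 := fun u => by positivity
  have hpos : ∀ u ∈ Ioi (1:ℝ), 0 < (u ^ m - 1) ^ (-(1:ℝ)/2) * (s ^ 2 * u ^ 2 + 1) ^ (-(3:ℝ)/2) :=
    fun u hu => mul_pos (Real.rpow_pos_of_pos (hb u hu) _) (Real.rpow_pos_of_pos (hq u) _)
  refine ⟨?_, hpos⟩
  have hcont : ContinuousOn (fun u : ℝ => (u ^ m - 1) ^ (-(1:ℝ)/2) * (s ^ 2 * u ^ 2 + 1) ^ (-(3:ℝ)/2)) (Ioi 1) := by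
    refine ContinuousOn.mul (ContinuousOn.rpow_const ?_ (fun u hu => Or.inl (hb u hu).ne'))
      (ContinuousOn.rpow_const ?_ (fun u hu => Or.inl (hq u).ne'))
    · fun_prop
    · fun_prop
  have hge : ∀ u ∈ Ioi (1:ℝ), u^2 - 1 ≤ u ^ m - 1 := fun u hu => by
    have := aux_pow m hm u 1 one_pos (le_of_lt hu)
    simpa using this
  refine aux_int _ 1 (1 + s⁻¹) hcont (fun u hu => (hpos u hu).le) ?_ ?_
  · intro u hu
    have hr : 0 < u - 1 := sub_pos.2 hu.1
    have h1 : u - 1 ≤ u ^ m - 1 := le_trans (by nlinarith) (hge u hu.1)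
    have h2 := Real.rpow_le_rpow_of_nonpos hr h1 (by norm_num : (-(1:ℝ)/2) ≤ 0)
    have h3 : (s ^ 2 * u ^ 2 + 1) ^ (-(3:ℝ)/2) ≤ 1 :=
      Real.rpow_le_one_of_one_le_of_nonpos (by nlinarith [mul_nonneg (sq_nonneg s) (sq_nonneg u)]) (by norm_num)
    have h4 := mul_le_mul h2 h3 (Real.rpow_pos_of_pos (hq u) _).le (by positivity)
    have h5 : 0 ≤ s⁻¹ * (u - 1) ^ (-(1:ℝ)/2) := by positivity
    nlinarith
  · intro u hu
    have hu' : (1:ℝ) + 1 < u := hu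
    have hr : 0 < u - 1 := by linarith
    have key : ∀ x : ℝ, 0 < x → (x ^ 2) ^ (-(1:ℝ)/2) = x⁻¹ := fun x hx => by
      rw [← Real.rpow_natCast, ← Real.rpow_mul hx.le]
      norm_num
      rw [Real.rpow_neg_one]
    have h1 : (u - 1)^2 ≤ u ^ m - 1 := le_trans (by nlinarith) (hge u (by simp; linarith))
    have h2 := Real.rpow_le_rpow_of_nonpos (by positivity) h1 (by norm_num : (-(1:ℝ)/2) ≤ 0)
    have h3 : (s ^ 2 * u ^ 2 + 1) ^ (-(3:ℝ)/2) ≤ (s ^ 2 * u ^ 2 + 1) ^ (-(1:ℝ)/2) :=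
      Real.rpow_le_rpow_of_exponent_le (by nlinarith [mul_nonneg (sq_nonneg s) (sq_nonneg u)]) (by norm_num)
    have h3' : (s * (u-1))^2 ≤ s ^ 2 * u ^ 2 + 1 := by
      nlinarith [mul_nonneg (sq_nonneg s) (by nlinarith : 0 ≤ u^2 - (u-1)^2)]
    have h3'' := h3.trans (Real.rpow_le_rpow_of_nonpos (by positivity) h3' (by norm_num : (-(1:ℝ)/2) ≤ 0))
    rw [key _ (by positivity)] at h2 h3''
    have h4 := mul_le_mul h2 h3'' (Real.rpow_pos_of_pos (hq u) _).le (by positivity)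
    refine h4.trans ?_
    rw [Real.rpow_neg hr.le, Real.rpow_two, add_mul]
    have h5 : (u-1)⁻¹ * (s * (u-1))⁻¹ = s⁻¹ * ((u-1)^2)⁻¹ := by field_simp
    rw [h5]
    have : 0 ≤ ((u-1)^2)⁻¹ := by positivity
    linarith

/-- A positive integrable function: its primitive. -/
lemma aux_prim (g : ℝ → ℝ) (a : ℝ) (hi : IntegrableOn g (Ioi a)) (hp : ∀ u ∈ Ioi a, 0 < g u) :
    ContinuousOn (fun x => ∫ u in a..x, g u) (Ici a) ∧
    MonotoneOn (fun x => ∫ u in a..x, g u) (Ici a) ∧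
    0 < ∫ u in Ioi a, g u ∧
    (∀ x ∈ Ici a, ∫ u in a..x, g u < ∫ u in Ioi a, g u) := by
  have hii : ∀ x y, a ≤ x → x ≤ y → IntervalIntegrable g volume x y := fun x y hx hxy =>
    (intervalIntegrable_iff_integrableOn_Ioc_of_le hxy).2
      (hi.mono_set (fun u hu => show a < u from lt_of_le_of_lt hx hu.1))
  have hpos : ∀ x ∈ Ici a, 0 < ∫ u in Ioi x, g u := by
    intro x hx
    have hix : IntegrableOn g (Ioi x) := hi.mono_set (Ioi_subset_Ioi hx)
    rw [setIntegral_pos_iff_support_of_nonneg_ae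
      ((ae_restrict_iff' measurableSet_Ioi).2 (Eventually.of_forall fun u hu => (hp u (show a < u from lt_of_le_of_lt hx hu)).le)) hix]
    have : Function.support g ∩ Ioi x = Ioi x :=
      inter_eq_right.2 fun u hu => (hp u (show a < u from lt_of_le_of_lt hx hu)).ne'
    rw [this]; simp
  refine ⟨?_, ?_, hpos a self_mem_Ici, ?_⟩
  · intro x hx
    have hx' : a ≤ x := hx
    have h := intervalIntegral.continuousOn_primitive_interval' (hii a (x+1) le_rfl (by linarith)) left_mem_uIcc
    rw [uIcc_of_le (by linarith)] at h
    refine (h x ⟨hx', by linarith⟩).mono_of_mem_nhdsWithin ?_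
    filter_upwards [self_mem_nhdsWithin, mem_nhdsWithin_of_mem_nhds (Iio_mem_nhds (by linarith : x < x+1))] with y h1 h2
    exact ⟨h1, le_of_lt h2⟩
  · intro x hx y hy hxy
    have := intervalIntegral.integral_add_adjacent_intervals (hii a x le_rfl hx) (hii x y hx hxy)
    have h0 : 0 ≤ ∫ u in x..y, g u := by
      rw [intervalIntegral.integral_of_le hxy]
      exact setIntegral_nonneg measurableSet_Ioc fun u hu => (hp u (show a < u from lt_of_le_of_lt hx hu.1)).le
    simp only
    linarith
  · intro x hx
    have h1 : ∫ u in Ioi a, g u = (∫ u in Ioc a x, g u) + ∫ u in Ioi x, g u := by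
      rw [← Ioc_union_Ioi_eq_Ioi (show a ≤ x from hx)]
      exact setIntegral_union (by simp) measurableSet_Ioi
        (hi.mono_set Ioc_subset_Ioi_self) (hi.mono_set (Ioi_subset_Ioi hx))
    rw [intervalIntegral.integral_of_le hx, h1]
    linarith [hpos x hx]

/-- Unique zero. -/
lemma aux_zero (g : ℝ → ℝ) (T b : ℝ) (hT : 0 < T) (hc : ContinuousOn g (Ico 0 T))
    (hm : StrictMonoOn g (Ico 0 T)) (h0 : g 0 < 0) (hb : b ∈ Ioo 0 T) (hgb : 0 < g b) :
    ∃ z ∈ Ioo 0 b, g z = 0 ∧ ∀ t ∈ Ioo 0 T, g t = 0 → t = z := by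
  obtain ⟨z, hz, hz0⟩ := intermediate_value_Ioo hb.1.le
    (hc.mono fun x hx => ⟨hx.1, lt_of_le_of_lt hx.2 hb.2⟩) (show (0:ℝ) ∈ Ioo (g 0) (g b) from ⟨h0, hgb⟩)
  exact ⟨z, hz, hz0, fun t ht h => hm.injOn ⟨ht.1.le, ht.2⟩ ⟨hz.1.le, hz.2.trans hb.2⟩ (h.trans hz0.symm)⟩

/-- Behaviour of the profile function. -/
lemma aux_f (n : ℕ) (hn : 2 ≤ n) (a : ℝ) (ha : 0 < a)
    (T : ℝ)
    (hT : T = Real.sinh a ^ (n-1) *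
      ∫ u in Set.Ioi a, (Real.sinh u ^ (2*n-2) - Real.sinh a ^ (2*n-2)) ^ (-(1:ℝ)/2))
    (f : ℝ → ℝ)
    (hf : ContDiffOn ℝ (⊤ : ℕ∞) f (Set.Ioo (-T) T))
    (hf0 : f 0 = a) (hf0' : deriv f 0 = 0)
    (hode : ∀ t ∈ Set.Ioo (-T) T,
      Real.sinh (f t) * deriv (deriv f) t
        = (n - 1 : ℝ) * Real.cosh (f t) * (1 + (deriv f t) ^ 2)) :
    0 < T ∧ ContinuousOn f (Ico 0 T) ∧ StrictMonoOn f (Ico 0 T) ∧ Tendsto f (𝓝[<] T) atTop := by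
  have hs : 0 < Real.sinh a := Real.sinh_pos_iff.2 ha
  obtain ⟨hi, hhc, hhp⟩ := aux_h (2*n-2) (by omega) a ha
  obtain ⟨Gc, Gm, Gp, Glt⟩ := aux_prim _ a hi hhp
  have hT0 : 0 < T := by rw [hT]; positivity
  have hn1 : (0:ℝ) < n - 1 := by
    have : (2:ℝ) ≤ n := by exact_mod_cast hn
    linarith
  have hsub : Ico 0 T ⊆ Ioo (-T) T := fun t ht => ⟨by linarith [ht.1], ht.2⟩
  have h0m : (0:ℝ) ∈ Ioo (-T) T := ⟨by linarith, hT0⟩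
  have hfc : ContinuousOn f (Ioo (-T) T) := hf.continuousOn
  have hfd : ∀ t ∈ Ioo (-T) T, HasDerivAt f (deriv f t) t := fun t ht =>
    ((hf.differentiableOn (by simp)).differentiableAt (isOpen_Ioo.mem_nhds ht)).hasDerivAt
  have hdf : ContDiffOn ℝ 1 (deriv f) (Ioo (-T) T) :=
    hf.deriv_of_isOpen isOpen_Ioo (by
      have h : ((2 : ℕ∞) : WithTop ℕ∞) ≤ ((⊤ : ℕ∞) : WithTop ℕ∞) := WithTop.coe_le_coe.2 le_top
      have e : (1 + 1 : WithTop ℕ∞) = ((2 : ℕ∞) : WithTop ℕ∞) := by norm_num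
      rw [e]; exact h)
  have hfdd : ∀ t ∈ Ioo (-T) T, HasDerivAt (deriv f) (deriv (deriv f) t) t := fun t ht =>
    ((hdf.differentiableOn (by simp)).differentiableAt (isOpen_Ioo.mem_nhds ht)).hasDerivAt
  have hne : ∀ t ∈ Ioo (-T) T, f t ≠ 0 := by
    intro t ht h
    have := hode t ht
    rw [h] at this
    simp at this
    rcases this with h | h
    · linarith
    · nlinarith [sq_nonneg (deriv f t)]
  have hfp : ∀ t ∈ Ioo (-T) T, 0 < f t := by
    intro t ht
    by_contra hcon
    push Not at hcon
    have := (isPreconnected_Ioo.intermediate_value ht h0m hfc) (show (0:ℝ) ∈ Icc (f t) (f 0) from ⟨hcon, by linarith⟩)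
    obtain ⟨x, hx, hx0⟩ := this
    exact hne x hx hx0
  have hsp : ∀ t ∈ Ioo (-T) T, 0 < Real.sinh (f t) := fun t ht => Real.sinh_pos_iff.2 (hfp t ht)
  have hdd : ∀ t ∈ Ioo (-T) T, 0 < deriv (deriv f) t := by
    intro t ht
    have h1 := hode t ht
    have h2 : 0 < (n - 1 : ℝ) * Real.cosh (f t) * (1 + (deriv f t) ^ 2) := by
      have := Real.cosh_pos (f t)
      positivity
    rw [← h1] at h2
    exact pos_of_mul_pos_right h2 (hsp t ht).le
  have hd1 : StrictMonoOn (deriv f) (Ioo (-T) T) :=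
    strictMonoOn_of_deriv_pos (convex_Ioo _ _) hdf.continuousOn (by rw [interior_Ioo]; exact hdd)
  have hd : ∀ t ∈ Ioo 0 T, 0 < deriv f t := fun t ht => by
    rw [← hf0']; exact hd1 h0m (hsub ⟨ht.1.le, ht.2⟩) ht.1
  have hfm : StrictMonoOn f (Ico 0 T) :=
    strictMonoOn_of_deriv_pos (convex_Ico _ _) (hfc.mono hsub) (by rw [interior_Ico]; exact hd)
  -- first integral
  have hP : ∀ t ∈ Ioo (-T) T, HasDerivAt (fun t => (1 + deriv f t ^ 2) / Real.sinh (f t) ^ (2*n-2)) 0 t := by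
    intro t ht
    have h1 := (((hfdd t ht).pow 2).const_add 1).div ((hfd t ht).sinh.pow (2*n-2)) (pow_pos (hsp t ht) _).ne'
    refine HasDerivAt.congr_deriv h1 ?_
    have h2 := hode t ht
    have hS := hsp t ht
    rw [div_eq_zero_iff]
    left
    obtain ⟨k, rfl⟩ := Nat.exists_eq_add_of_le hn
    have e1 : 2 * (2 + k) - 2 = 2 * k + 1 + 1 := by omega
    have e2 : 2 * (2 + k) - 2 - 1 = 2 * k + 1 := by omega
    simp only [e1, e2, Nat.add_sub_cancel, Pi.pow_apply]
    push_cast at h2 ⊢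
    rw [pow_succ]
    linear_combination (2 * deriv f t * Real.sinh (f t) ^ (2*k+1)) * h2
  have hconst : ∀ t ∈ Ioo (-T) T, (1 + deriv f t ^ 2) / Real.sinh (f t) ^ (2*n-2) = 1 / Real.sinh a ^ (2*n-2) := by
    intro t ht
    have := isOpen_Ioo.is_const_of_deriv_eq_zero (isPreconnected_Ioo)
      (fun t ht => (hP t ht).differentiableAt.differentiableWithinAt)
      (fun t ht => (hP t ht).deriv) ht h0m
    simp only [hf0, hf0'] at this
    simpa using this
  have hsq : ∀ t ∈ Ioo (-T) T, Real.sinh (f t) ^ (2*n-2) - Real.sinh a ^ (2*n-2)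
      = (deriv f t * Real.sinh a ^ (n-1)) ^ 2 := by
    intro t ht
    have h1 := hconst t ht
    have hS := pow_pos (hsp t ht) (2*n-2)
    have hA := pow_pos hs (2*n-2)
    rw [div_eq_div_iff hS.ne' hA.ne'] at h1
    have e1 : 2*n-2 = (n-1)*2 := by omega
    rw [mul_pow, ← pow_mul, ← e1]
    linarith
  have hGd : ∀ t ∈ Ioo 0 T, HasDerivAt (fun t => Real.sinh a ^ (n-1) *
      (∫ u in a..(f t), (Real.sinh u ^ (2*n-2) - Real.sinh a ^ (2*n-2)) ^ (-(1:ℝ)/2)) - t) 0 t := by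
    intro t ht
    have ht' := hsub ⟨ht.1.le, ht.2⟩
    have hat : a < f t := by
      rw [← hf0]; exact hfm ⟨le_rfl, hT0⟩ ⟨ht.1.le, ht.2⟩ ht.1
    have h1 := intervalIntegral.integral_hasDerivAt_right
      ((intervalIntegrable_iff_integrableOn_Ioc_of_le hat.le).2 (hi.mono_set Ioc_subset_Ioi_self))
      (hhc.stronglyMeasurableAtFilter isOpen_Ioi _ hat)
      (hhc.continuousAt (Ioi_mem_nhds hat))
    have h2 := ((h1.comp t (hfd t ht')).const_mul (Real.sinh a ^ (n-1))).sub (hasDerivAt_id t)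
    refine HasDerivAt.congr_deriv h2 ?_
    have hd0 := hd t ht
    rw [hsq t ht', ← Real.rpow_natCast (_ * _), ← Real.rpow_mul (by positivity)]
    norm_num
    rw [Real.rpow_neg_one]
    have : 0 < Real.sinh a ^ (n-1) := by positivity
    field_simp
    ring
  have hfa : ∀ t ∈ Ico 0 T, a ≤ f t := fun t ht => by
    rw [← hf0]; exact hfm.monotoneOn ⟨le_rfl, hT0⟩ ht ht.1
  have hmono : MonotoneOn (fun t => Real.sinh a ^ (n-1) *
      (∫ u in a..(f t), (Real.sinh u ^ (2*n-2) - Real.sinh a ^ (2*n-2)) ^ (-(1:ℝ)/2)) - t) (Ico 0 T) := by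
    refine monotoneOn_of_deriv_nonneg (convex_Ico _ _) ?_ ?_ ?_
    · exact (continuousOn_const.mul (Gc.comp (hfc.mono hsub) hfa)).sub continuousOn_id
    · rw [interior_Ico]
      exact fun t ht => (hGd t ht).differentiableAt.differentiableWithinAt
    · rw [interior_Ico]
      exact fun t ht => (hGd t ht).deriv.ge
  have hle : ∀ t ∈ Ico 0 T, t ≤ Real.sinh a ^ (n-1) *
      (∫ u in a..(f t), (Real.sinh u ^ (2*n-2) - Real.sinh a ^ (2*n-2)) ^ (-(1:ℝ)/2)) := by
    intro t ht
    have := hmono ⟨le_rfl, hT0⟩ ht ht.1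
    simp only [hf0, intervalIntegral.integral_same] at this
    linarith
  refine ⟨hT0, hfc.mono hsub, hfm, ?_⟩
  rw [tendsto_atTop]
  intro M
  by_cases hM : ∃ t0 ∈ Ico 0 T, M ≤ f t0
  · obtain ⟨t0, ht0, hM⟩ := hM
    filter_upwards [Ioo_mem_nhdsLT ht0.2] with t ht
    exact hM.trans (hfm.monotoneOn ht0 ⟨ht0.1.trans ht.1.le, ht.2⟩ ht.1.le)
  · exfalso
    push Not at hM
    have hMa : a ≤ M := by rw [← hf0]; exact (hM 0 ⟨le_rfl, hT0⟩).le
    have h1 := mul_lt_mul_of_pos_left (Glt M hMa) (pow_pos hs (n-1))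
    rw [← hT] at h1
    have hq := hle (max 0 ((Real.sinh a ^ (n-1) *
      (∫ u in a..M, (Real.sinh u ^ (2*n-2) - Real.sinh a ^ (2*n-2)) ^ (-(1:ℝ)/2)) + T)/2))
      ⟨le_max_left _ _, max_lt hT0 (by linarith)⟩
    set t1 := max 0 ((Real.sinh a ^ (n-1) *
      (∫ u in a..M, (Real.sinh u ^ (2*n-2) - Real.sinh a ^ (2*n-2)) ^ (-(1:ℝ)/2)) + T)/2) with ht1
    have ht1m : t1 ∈ Ico 0 T := ⟨le_max_left _ _, max_lt hT0 (by linarith)⟩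
    have h2 := mul_le_mul_of_nonneg_left (Gm (hfa t1 ht1m) hMa (hM t1 ht1m).le) (pow_pos hs (n-1)).le
    simp only at h2
    have h3 : _ ≤ t1 := le_max_right _ _
    linarith

/-- Jacobi fields on the catenoid in `ℍⁿ × ℝ`: `E(a)` is finite and positive; the vertical
Jacobi field `v` vanishes only at `0` and tends to `1` at `T(a)`; the variation Jacobi field
`e` satisfies `e(0) = −1` and has exactly one zero `z(a) ∈ (0, T(a))`; and
`y = e + E(a)·v` has exactly one zero `ℓ(a) ∈ (0, T(a))`, with `ℓ(a) ∈ (0, z(a))`. -/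
theorem stmt13 (n : ℕ) (hn : 2 ≤ n) (a : ℝ) (ha : 0 < a)
    (T : ℝ)
    (hT : T = Real.sinh a ^ (n-1) *
      ∫ u in Set.Ioi a, (Real.sinh u ^ (2*n-2) - Real.sinh a ^ (2*n-2)) ^ (-(1:ℝ)/2))
    (f : ℝ → ℝ)
    (hf : ContDiffOn ℝ (⊤ : ℕ∞) f (Set.Ioo (-T) T))
    (hfeven : ∀ t ∈ Set.Ioo (-T) T, f (-t) = f t)
    (hf0 : f 0 = a) (hf0' : deriv f 0 = 0)
    (hode : ∀ t ∈ Set.Ioo (-T) T,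
      Real.sinh (f t) * deriv (deriv f) t
        = (n - 1 : ℝ) * Real.cosh (f t) * (1 + (deriv f t) ^ 2))
    (v e₀ e₁ e : ℝ → ℝ)
    (hv : ∀ t, 0 ≤ t →
      v t = Real.sqrt (1 - (Real.sinh a / Real.sinh (f t)) ^ (2*n-2)))
    (he₀ : ∀ t, 0 ≤ t →
      e₀ t = (Real.cosh a / Real.cosh (f t)) * (Real.sinh a / Real.sinh (f t)) ^ (n-2))
    (he₁ : ∀ t, 0 ≤ t →
      e₁ t = Real.cosh a * ∫ u in (1:ℝ)..(Real.sinh (f t) / Real.sinh a),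
        (u ^ (2*n-2) - 1) ^ (-(1:ℝ)/2) * (Real.sinh a ^ 2 * u ^ 2 + 1) ^ (-(3:ℝ)/2))
    (he : ∀ t, 0 ≤ t → e t = -e₀ t + v t * e₁ t)
    (E : ℝ)
    (hE : E = Real.cosh a * ∫ u in Set.Ioi (1:ℝ),
      (u ^ (2*n-2) - 1) ^ (-(1:ℝ)/2) * (Real.sinh a ^ 2 * u ^ 2 + 1) ^ (-(3:ℝ)/2)) :
    (MeasureTheory.IntegrableOn
      (fun u => (u ^ (2*n-2) - 1) ^ (-(1:ℝ)/2) * (Real.sinh a ^ 2 * u ^ 2 + 1) ^ (-(3:ℝ)/2))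
      (Set.Ioi 1) ∧ 0 < E) ∧
    (v 0 = 0 ∧ (∀ t ∈ Set.Ioo 0 T, v t ≠ 0) ∧ Filter.Tendsto v (𝓝[<] T) (𝓝 1)) ∧
    (e 0 = -1 ∧
      ∃ z ∈ Set.Ioo 0 T, e z = 0 ∧ (∀ t ∈ Set.Ioo 0 T, e t = 0 → t = z) ∧
        ∃ ℓ ∈ Set.Ioo 0 z, e ℓ + E * v ℓ = 0 ∧
          ∀ t ∈ Set.Ioo 0 T, e t + E * v t = 0 → t = ℓ) := by

  have hs : 0 < Real.sinh a := Real.sinh_pos_iff.2 ha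
  obtain ⟨hT0, hfc, hfm, hft⟩ := aux_f n hn a ha T hT f hf hf0 hf0' hode
  obtain ⟨hki, hkp⟩ := aux_k (2*n-2) (by omega) (Real.sinh a) hs
  obtain ⟨Kc, Km, Kp, Klt⟩ := aux_prim _ 1 hki hkp
  have hca := Real.cosh_pos a
  have hEp : 0 < E := by rw [hE]; exact mul_pos hca Kp
  have h0m : (0:ℝ) ∈ Ico 0 T := ⟨le_rfl, hT0⟩
  have hfa : ∀ t ∈ Ico 0 T, a ≤ f t := fun t ht => by
    rw [← hf0]; exact hfm.monotoneOn h0m ht ht.1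
  have hsp : ∀ t ∈ Ico 0 T, 0 < Real.sinh (f t) := fun t ht =>
    Real.sinh_pos_iff.2 (ha.trans_le (hfa t ht))
  -- the ratio
  have hqc : ContinuousOn (fun t => Real.sinh a / Real.sinh (f t)) (Ico 0 T) :=
    continuousOn_const.div (Real.continuous_sinh.comp_continuousOn hfc) fun t ht => (hsp t ht).ne'
  have hqm : ∀ x ∈ Ico 0 T, ∀ y ∈ Ico 0 T, x < y →
      Real.sinh a / Real.sinh (f y) < Real.sinh a / Real.sinh (f x) := fun x hx y hy hxy =>
    div_lt_div_of_pos_left hs (hsp x hx) (Real.sinh_lt_sinh.2 (hfm hx hy hxy))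
  have hqp : ∀ t ∈ Ico 0 T, 0 < Real.sinh a / Real.sinh (f t) := fun t ht => div_pos hs (hsp t ht)
  have hq0 : Real.sinh a / Real.sinh (f 0) = 1 := by rw [hf0]; exact div_self hs.ne'
  have hsinh : Tendsto (fun t => Real.sinh (f t)) (𝓝[<] T) atTop := by
    refine tendsto_atTop_mono' _ ?_ hft
    filter_upwards [Ioo_mem_nhdsLT hT0] with t ht
    exact Real.self_le_sinh_iff.2 (ha.le.trans (hfa t ⟨ht.1.le, ht.2⟩))
  have hcosh : Tendsto (fun t => Real.cosh (f t)) (𝓝[<] T) atTop :=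
    tendsto_atTop_mono (fun t => (Real.sinh_lt_cosh (f t)).le) hsinh
  have hqt : Tendsto (fun t => Real.sinh a / Real.sinh (f t)) (𝓝[<] T) (𝓝 0) :=
    hsinh.const_div_atTop _
  have hm0 : 2*n-2 ≠ 0 := by omega
  have hIco : ∀ᶠ t in 𝓝[<] T, t ∈ Ico 0 T := by
    filter_upwards [Ioo_mem_nhdsLT hT0] with t ht using ⟨ht.1.le, ht.2⟩
  -- v
  have hv0 : v 0 = 0 := by rw [hv 0 le_rfl, hq0]; simp
  have hvm : StrictMonoOn v (Ico 0 T) := by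
    intro x hx y hy hxy
    rw [hv x hx.1, hv y hy.1]
    have hlt := pow_lt_pow_left₀ (hqm x hx y hy hxy) (hqp y hy).le hm0
    have hle1 : Real.sinh a / Real.sinh (f x) ≤ 1 := by
      rw [div_le_one (hsp x hx)]; exact Real.sinh_le_sinh.2 (hfa x hx)
    have := pow_le_one₀ (hqp x hx).le hle1 (n := 2*n-2)
    exact Real.sqrt_lt_sqrt (by linarith) (by linarith)
  have hvc : ContinuousOn v (Ico 0 T) := by
    refine ContinuousOn.congr (f := fun t => Real.sqrt (1 - (Real.sinh a / Real.sinh (f t)) ^ (2*n-2))) ?_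
      fun t ht => hv t ht.1
    exact (continuousOn_const.sub (hqc.pow _)).sqrt
  have hvt : Tendsto v (𝓝[<] T) (𝓝 1) := by
    have h1 : Tendsto (fun t => Real.sqrt (1 - (Real.sinh a / Real.sinh (f t)) ^ (2*n-2))) (𝓝[<] T) (𝓝 1) := by
      have := (tendsto_const_nhds (x := (1:ℝ)).sub (hqt.pow (2*n-2))).sqrt
      simpa [hm0] using this
    refine h1.congr' ?_
    filter_upwards [hIco] with t ht using (hv t ht.1).symm
  have hvp : ∀ t ∈ Ioo 0 T, 0 < v t := fun t ht => by
    rw [← hv0]; exact hvm h0m ⟨ht.1.le, ht.2⟩ ht.1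
  have hvn : ∀ t ∈ Ico 0 T, 0 ≤ v t := fun t ht => by
    rw [← hv0]; exact hvm.monotoneOn h0m ht ht.1
  -- e₀
  have he0c : ContinuousOn e₀ (Ico 0 T) := by
    refine ContinuousOn.congr (f := fun t => (Real.cosh a / Real.cosh (f t)) * (Real.sinh a / Real.sinh (f t)) ^ (n-2)) ?_
      fun t ht => he₀ t ht.1
    exact (continuousOn_const.div (Real.continuous_cosh.comp_continuousOn hfc)
      fun t ht => (Real.cosh_pos _).ne').mul (hqc.pow _)
  have he0m : ∀ x ∈ Ico 0 T, ∀ y ∈ Ico 0 T, x < y → e₀ y < e₀ x := by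
    intro x hx y hy hxy
    rw [he₀ x hx.1, he₀ y hy.1]
    have h1 : Real.cosh a / Real.cosh (f y) < Real.cosh a / Real.cosh (f x) := by
      refine div_lt_div_of_pos_left hca (Real.cosh_pos _) (Real.cosh_lt_cosh.2 ?_)
      rw [abs_of_pos (ha.trans_le (hfa x hx)), abs_of_pos (ha.trans_le (hfa y hy))]
      exact hfm hx hy hxy
    have h2 := pow_le_pow_left₀ (hqp y hy).le (hqm x hx y hy hxy).le (n-2)
    exact mul_lt_mul h1 h2 (pow_pos (hqp y hy) _) (div_pos hca (Real.cosh_pos _)).le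
  have he0t : Tendsto e₀ (𝓝[<] T) (𝓝 0) := by
    have h1 : Tendsto (fun t => (Real.cosh a / Real.cosh (f t)) * (Real.sinh a / Real.sinh (f t)) ^ (n-2)) (𝓝[<] T) (𝓝 0) := by
      have := (hcosh.const_div_atTop (Real.cosh a)).mul (hqt.pow (n-2))
      simpa using this
    refine h1.congr' ?_
    filter_upwards [hIco] with t ht using (he₀ t ht.1).symm
  have he00 : e₀ 0 = 1 := by rw [he₀ 0 le_rfl, hq0, hf0]; simp [hca.ne']
  -- e₁
  have hw1 : ∀ t ∈ Ico 0 T, Real.sinh (f t) / Real.sinh a ∈ Ici 1 := fun t ht => by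
    rw [mem_Ici, one_le_div hs]; exact Real.sinh_le_sinh.2 (hfa t ht)
  have hwc : ContinuousOn (fun t => Real.sinh (f t) / Real.sinh a) (Ico 0 T) :=
    (Real.continuous_sinh.comp_continuousOn hfc).div_const _
  have he1c : ContinuousOn e₁ (Ico 0 T) :=
    ContinuousOn.congr (continuousOn_const.mul (Kc.comp hwc hw1)) fun t ht => he₁ t ht.1
  have he1m : MonotoneOn e₁ (Ico 0 T) := by
    intro x hx y hy hxy
    rw [he₁ x hx.1, he₁ y hy.1]
    refine mul_le_mul_of_nonneg_left (Km (hw1 x hx) (hw1 y hy) ?_) hca.le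
    exact div_le_div_of_nonneg_right (Real.sinh_le_sinh.2 (hfm.monotoneOn hx hy hxy)) hs.le
  have he10 : e₁ 0 = 0 := by
    rw [he₁ 0 le_rfl, hf0, div_self hs.ne']; simp
  have he1n : ∀ t ∈ Ico 0 T, 0 ≤ e₁ t := fun t ht => by
    rw [← he10]; exact he1m h0m ht ht.1
  have he1t : Tendsto e₁ (𝓝[<] T) (𝓝 E) := by
    have h1 := (intervalIntegral_tendsto_integral_Ioi 1 hki (hsinh.atTop_div_const hs)).const_mul (Real.cosh a)
    rw [← hE] at h1
    refine h1.congr' ?_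
    filter_upwards [hIco] with t ht using (he₁ t ht.1).symm
  -- e
  have hec : ContinuousOn e (Ico 0 T) :=
    ContinuousOn.congr (he0c.neg.add (hvc.mul he1c)) fun t ht => he t ht.1
  have hem : StrictMonoOn e (Ico 0 T) := by
    intro x hx y hy hxy
    rw [he x hx.1, he y hy.1]
    have h1 := he0m x hx y hy hxy
    have h2 := mul_le_mul (hvm.monotoneOn hx hy hxy.le) (he1m hx hy hxy.le) (he1n x hx) (hvn y hy)
    linarith
  have he0 : e 0 = -1 := by rw [he 0 le_rfl, he00, hv0]; simp
  have het : Tendsto e (𝓝[<] T) (𝓝 E) := by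
    have h1 : Tendsto (fun t => -e₀ t + v t * e₁ t) (𝓝[<] T) (𝓝 E) := by
      simpa using he0t.neg.add (hvt.mul he1t)
    refine h1.congr' ?_
    filter_upwards [hIco] with t ht using (he t ht.1).symm
  obtain ⟨b, hb, hbT⟩ := ((het.eventually (lt_mem_nhds hEp)).and (Ioo_mem_nhdsLT hT0)).exists
  obtain ⟨z, hz, hz0, hzu⟩ := aux_zero e T b hT0 hec hem (by rw [he0]; norm_num) hbT hb
  have hzT : z ∈ Ioo 0 T := ⟨hz.1, hz.2.trans hbT.2⟩
  obtain ⟨l, hl, hl0, hlu⟩ := aux_zero (fun t => e t + E * v t) T z hT0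
    (hec.add (continuousOn_const.mul hvc))
    (fun x hx y hy hxy => add_lt_add (hem hx hy hxy) (mul_lt_mul_of_pos_left (hvm hx hy hxy) hEp))
    (by simp only [he0, hv0]; norm_num) hzT
    (by simp only [hz0]; have := mul_pos hEp (hvp z hzT); linarith)
  exact ⟨⟨hki, hEp⟩, ⟨hv0, fun t ht => (hvp t ht).ne', hvt⟩, he0, z, hzT, hz0, hzu, l, hl, hl0, hlu⟩
end
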